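/- arXiv:0910.3417 — 8 statements merged into one kernel-verified Lean document; each statement's English description precedes it below -/
import Mathlib

section
/- Let q be a prime power with q ≡ 3 (mod 4), let n be a positive integer, and let k be an odd divisor of n. Set T_k = Σ_{i=0}^{n/k−1} t^{q^{ki}} ∈ 𝔽_q[t], F_k = T_k^{(q^k−1)/2} and G_k = T_k^{(q^k−3)/4} (note q^k ≡ 3 (mod 4), so (q^k−3)/4 is an integer). Then (t^{q^n}−t)·G_k² = F_k³ − F_k in 𝔽_q[t], the formal derivative F_k′ is nonzero, and deg F_k = (q^n − q^{n−k})/2, so that for distinct odd divisors k ≠ k′ of n the separable ∞-integral points Q_k = (F_k, G_k) and Q_{k′} = (F_{k′}, G_{k′}) of the quadratic twist (t^{q^n}−t)y² = x³ − x are distinct. -/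
open Polynomial

/-- The trace polynomial `T_k = Σ_{i=0}^{n/k-1} t^(q^(k*i))` over `𝔽_q`. -/
noncomputable def tracePoly (Fq : Type*) [Field Fq] [Fintype Fq] (n k : ℕ) : Polynomial Fq :=
  ∑ i ∈ Finset.range (n / k), X ^ (Fintype.card Fq) ^ (k * i)

/-- `F_k = T_k ^ ((q^k - 1)/2)`. -/
noncomputable def Fquad (Fq : Type*) [Field Fq] [Fintype Fq] (n k : ℕ) : Polynomial Fq :=
  tracePoly Fq n k ^ ((Fintype.card Fq ^ k - 1) / 2)

/-- `G_k = T_k ^ ((q^k - 3)/4)`. -/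
noncomputable def Gquad (Fq : Type*) [Field Fq] [Fintype Fq] (n k : ℕ) : Polynomial Fq :=
  tracePoly Fq n k ^ ((Fintype.card Fq ^ k - 3) / 4)

/-- The sum defining `tracePoly` has the degree of its last term. -/
lemma natDegree_sum_X_pow_pow {R : Type*} [Semiring R] [Nontrivial R] {q k : ℕ}
    (hq : 1 < q) (hk : 0 < k) (m : ℕ) :
    (∑ i ∈ Finset.range (m + 1), (X : R[X]) ^ q ^ (k * i)).natDegree = q ^ (k * m) := by
  induction m with
  | zero => simp
  | succ m ih =>
    rw [Finset.sum_range_succ, natDegree_add_eq_right_of_natDegree_lt, natDegree_X_pow]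
    rw [ih, natDegree_X_pow]
    exact Nat.pow_lt_pow_right hq (Nat.mul_lt_mul_of_pos_left (Nat.lt_succ_self m) hk)

lemma pow_mod_four_eq_three {q k : ℕ} (hq : q % 4 = 3) (hk : Odd k) : q ^ k % 4 = 3 := by
  obtain ⟨j, rfl⟩ := hk
  rw [Nat.pow_mod, hq, pow_succ, pow_mul, Nat.mul_mod, Nat.pow_mod]
  norm_num

section TracePoly

variable {Fq : Type*} [Field Fq] [Fintype Fq] {n k : ℕ}

lemma tracePoly_pow_sub (hkn : k ∣ n) :
    tracePoly Fq n k ^ (Fintype.card Fq ^ k) - tracePoly Fq n k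
      = X ^ (Fintype.card Fq ^ n) - X := by
  obtain ⟨p, hp⟩ := CharP.exists Fq
  obtain ⟨m, hprime, hcard⟩ := FiniteField.card Fq p
  have : Fact p.Prime := ⟨hprime⟩
  have hfrob : tracePoly Fq n k ^ (Fintype.card Fq ^ k)
      = ∑ i ∈ Finset.range (n / k), X ^ (Fintype.card Fq) ^ (k * (i + 1)) := by
    have hpow : Fintype.card Fq ^ k = p ^ ((m : ℕ) * k) := by rw [hcard, pow_mul]
    rw [tracePoly, hpow, sum_pow_char_pow, ← hpow]
    refine Finset.sum_congr rfl fun i _ => ?_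
    rw [← pow_mul, ← pow_add, mul_add, mul_one]
  rw [hfrob, tracePoly, ← Finset.sum_sub_distrib,
    Finset.sum_range_sub (fun i => (X : Fq[X]) ^ (Fintype.card Fq) ^ (k * i)),
    Nat.mul_div_cancel' hkn]
  simp

lemma derivative_tracePoly (hk : 0 < k) (hkn : 0 < n / k) :
    derivative (tracePoly Fq n k) = 1 := by
  rw [tracePoly, derivative_sum, Finset.sum_eq_single_of_mem 0 (by simpa using hkn)]
  · simp
  · intro i _ hi
    rw [derivative_X_pow, Nat.cast_pow, FiniteField.cast_card_eq_zero,
      zero_pow (Nat.mul_ne_zero hk.ne' hi)]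
    simp

lemma natDegree_tracePoly (hn : 0 < n) (hkn : k ∣ n) :
    (tracePoly Fq n k).natDegree = Fintype.card Fq ^ (n - k) := by
  obtain ⟨m, rfl⟩ := hkn
  have hk : 0 < k := Nat.pos_of_mul_pos_right hn
  obtain ⟨m, rfl⟩ := Nat.exists_eq_succ_of_ne_zero (Nat.pos_of_mul_pos_left hn).ne'
  rw [tracePoly, Nat.mul_div_cancel_left _ hk, Nat.succ_eq_add_one,
    natDegree_sum_X_pow_pow Fintype.one_lt_card hk, mul_add, mul_one, Nat.add_sub_cancel]

lemma sub_mul_Gquad_sq (hq : Fintype.card Fq % 4 = 3) (hkn : k ∣ n) (hk : Odd k) :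
    (X ^ (Fintype.card Fq ^ n) - X) * Gquad Fq n k ^ 2 = Fquad Fq n k ^ 3 - Fquad Fq n k := by
  have hmod := pow_mod_four_eq_three hq hk
  rw [← tracePoly_pow_sub hkn, Gquad, Fquad, ← pow_mul, ← pow_mul, sub_mul, ← pow_add,
    ← pow_succ']
  congr 2 <;> omega

lemma derivative_Fquad_ne_zero (hq : Fintype.card Fq % 4 = 3) (hn : 0 < n) (hkn : k ∣ n)
    (hk : Odd k) : derivative (Fquad Fq n k) ≠ 0 := by
  have hmod := pow_mod_four_eq_three hq hk
  have hT : tracePoly Fq n k ≠ 0 := by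
    intro h
    have := natDegree_tracePoly (Fq := Fq) hn hkn
    rw [h, natDegree_zero] at this
    exact (pow_pos Fintype.card_pos _).ne this
  have hcoeff : (((Fintype.card Fq ^ k - 1) / 2 : ℕ) : Fq) ≠ 0 := by
    intro h
    have hnat : 2 * ((Fintype.card Fq ^ k - 1) / 2) + 1 = Fintype.card Fq ^ k := by omega
    have := congrArg (Nat.cast : ℕ → Fq) hnat
    simp [h, hk.pos.ne'] at this
  rw [Fquad, derivative_pow, derivative_tracePoly hk.pos
    (Nat.div_pos (Nat.le_of_dvd hn hkn) hk.pos), mul_one]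
  exact mul_ne_zero (C_ne_zero.mpr hcoeff) (pow_ne_zero _ hT)

lemma two_mul_natDegree_Fquad (hq : Fintype.card Fq % 4 = 3) (hn : 0 < n) (hkn : k ∣ n)
    (hk : Odd k) :
    2 * (Fquad Fq n k).natDegree = Fintype.card Fq ^ n - Fintype.card Fq ^ (n - k) := by
  have hmod := pow_mod_four_eq_three hq hk
  have htwo : 2 * ((Fintype.card Fq ^ k - 1) / 2) = Fintype.card Fq ^ k - 1 := by omega
  rw [Fquad, natDegree_pow, natDegree_tracePoly hn hkn, ← mul_assoc, htwo, Nat.sub_mul,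
    ← pow_add, Nat.add_sub_cancel' (Nat.le_of_dvd hn hkn), one_mul]

lemma eq_of_Fquad_eq (hq : Fintype.card Fq % 4 = 3) (hn : 0 < n) {k' : ℕ} (hkn : k ∣ n)
    (hkn' : k' ∣ n) (hk : Odd k) (hk' : Odd k') (h : Fquad Fq n k = Fquad Fq n k') :
    k = k' := by
  have hdeg := two_mul_natDegree_Fquad hq hn hkn hk
  rw [h, two_mul_natDegree_Fquad hq hn hkn' hk'] at hdeg
  have hle := Nat.le_of_dvd hn hkn
  have hle' := Nat.le_of_dvd hn hkn'
  have hpow (j : ℕ) : Fintype.card Fq ^ (n - j) ≤ Fintype.card Fq ^ n :=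
    Nat.pow_le_pow_right Fintype.card_pos (Nat.sub_le n j)
  have hexp : n - k = n - k' := by
    refine Nat.pow_right_injective (Fintype.one_lt_card (α := Fq)) ?_
    have := hpow k
    have := hpow k'
    dsimp only
    omega
  omega

end TracePoly

theorem stmt0 (Fq : Type*) [Field Fq] [Fintype Fq]
    (hq : Fintype.card Fq % 4 = 3) (n : ℕ) (hn : 0 < n) :
    (∀ k, k ∣ n → Odd k →
      (X ^ (Fintype.card Fq ^ n) - X) * Gquad Fq n k ^ 2
          = Fquad Fq n k ^ 3 - Fquad Fq n k ∧
        derivative (Fquad Fq n k) ≠ 0 ∧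
        (Fquad Fq n k).natDegree
          = (Fintype.card Fq ^ n - Fintype.card Fq ^ (n - k)) / 2) ∧
    (∀ k k', k ∣ n → k' ∣ n → Odd k → Odd k' → k ≠ k' →
      (Fquad Fq n k, Gquad Fq n k) ≠ (Fquad Fq n k', Gquad Fq n k')) := by
  refine ⟨fun k hkn hk => ⟨sub_mul_Gquad_sq hq hkn hk, derivative_Fquad_ne_zero hq hn hkn hk, ?_⟩,
    fun k k' hkn hkn' hk hk' hne h =>
      hne (eq_of_Fquad_eq hq hn hkn hkn' hk hk' (congrArg Prod.fst h))⟩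
  have := two_mul_natDegree_Fquad hq hn hkn hk
  omega
end

section
/- Let q be a prime power with q ≡ 2 (mod 3), let k₁, …, k_n be distinct odd positive integers, and let A₀ = Σ_j a_j t^j ∈ 𝔽_q[t] be a polynomial with nonzero constant term such that t^{k_i} − 1 divides A₀ in 𝔽_q[t] for every i = 1, …, n. Let A = Σ_j a_j t^{q^j} be the associated 𝔽_q-additive polynomial. Then there exist n pairwise distinct pairs (F_1,G_1), …, (F_n,G_n) ∈ 𝔽_q[t] × 𝔽_q[t] such that for each i, G_i² − G_i = A·F_i³ and G_i′ ≠ 0; that is, the cubic twist y² − y = A(t)·x³ has at least n separable ∞-integral points (lying in distinct Frobenius orbits). -/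
open Polynomial

/-- The `q`-power map on `K[X]`, as a `K`-linear endomorphism. -/
noncomputable def frobeniusEnd (K : Type*) [Field K] [Fintype K] : Module.End K K[X] :=
  (expand K (Fintype.card K)).toLinearMap

/-- The additive polynomial `∑ a_j X ^ (q ^ j)` associated with `∑ a_j X ^ j`. -/
noncomputable def additivePoly {K : Type*} [Field K] [Fintype K] (p : K[X]) : K[X] :=
  aeval (frobeniusEnd K) p X

section

variable {K : Type*} [Field K] [Fintype K]

theorem frobeniusEnd_apply (f : K[X]) : frobeniusEnd K f = f ^ Fintype.card K := by
  simp [frobeniusEnd, FiniteField.expand_card]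

theorem frobeniusEnd_pow_apply (k : ℕ) (f : K[X]) :
    (frobeniusEnd K ^ k) f = f ^ Fintype.card K ^ k := by
  induction k with
  | zero => simp
  | succ k ih => rw [pow_succ', Module.End.mul_apply, ih, frobeniusEnd_apply, ← pow_mul, pow_succ]

theorem additivePoly_eq_sum (p : K[X]) :
    additivePoly p = ∑ j ∈ Finset.range (p.natDegree + 1),
      C (p.coeff j) * X ^ Fintype.card K ^ j := by
  rw [additivePoly, aeval_eq_sum_range, LinearMap.sum_apply]
  simp [frobeniusEnd_pow_apply, smul_eq_C_mul]

theorem additivePoly_X_pow_sub_one_mul (k : ℕ) (p : K[X]) :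
    additivePoly ((X ^ k - 1) * p) =
      additivePoly p ^ Fintype.card K ^ k - additivePoly p := by
  simp [additivePoly, frobeniusEnd_pow_apply]

theorem derivative_additivePoly (p : K[X]) : derivative (additivePoly p) = C (p.coeff 0) := by
  conv_lhs => rw [← X_mul_divX_add p]
  simp [-X_mul_divX_add, additivePoly, frobeniusEnd_apply, derivative_pow, smul_eq_C_mul]

/-- If `A = B ^ Q - B` with `Q ≡ 2 (mod 3)`, then `(B ^ ((Q - 2) / 3), B ^ (Q - 1))` lies on
`y² - y = A x³`. -/
theorem cubicTwist_point_of_pow_sub {R : Type*} [CommRing R] {Q : ℕ} (hQ : Q % 3 = 2) (B : R) :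
    (B ^ (Q - 1)) ^ 2 - B ^ (Q - 1) = (B ^ Q - B) * (B ^ ((Q - 2) / 3)) ^ 3 := by
  obtain ⟨m, rfl⟩ : ∃ m, Q = 3 * m + 2 := ⟨Q / 3, by omega⟩
  rw [show 3 * m + 2 - 1 = 3 * m + 1 by omega, show (3 * m + 2 - 2) / 3 = m by omega]
  ring

theorem derivative_pow_card_pow_sub_one_ne_zero {k : ℕ} (hk : k ≠ 0) {B : K[X]}
    (hB : derivative B ≠ 0) : derivative (B ^ (Fintype.card K ^ k - 1)) ≠ 0 := by
  have hB0 : B ≠ 0 := by rintro rfl; simp at hB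
  have hcard : ((Fintype.card K ^ k - 1 : ℕ) : K) ≠ 0 := by
    rw [Nat.cast_sub (Nat.one_le_pow _ _ Fintype.card_pos)]
    simp [hk]
  rw [derivative_pow]
  exact mul_ne_zero (mul_ne_zero (C_ne_zero.mpr hcard) (pow_ne_zero _ hB0)) hB

end

/-- The pair `(B ^ ((Q - 2) / 3), B ^ (Q - 1))` determines `Q` when `B` is
nonconstant. -/
theorem eq_of_cubicTwist_points_eq {K : Type*} [Field K] {B D : K[X]} (hB : derivative B ≠ 0) {Q R : ℕ}
    (hQ : Q % 3 = 2) (hR : R % 3 = 2) (hF : B ^ ((Q - 2) / 3) = D ^ ((R - 2) / 3))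
    (hG : B ^ (Q - 1) = D ^ (R - 1)) : Q = R := by
  have hB0 : B ≠ 0 := by rintro rfl; simp at hB
  obtain ⟨m, rfl⟩ : ∃ m, Q = 3 * m + 2 := ⟨Q / 3, by omega⟩
  obtain ⟨l, rfl⟩ : ∃ l, R = 3 * l + 2 := ⟨R / 3, by omega⟩
  rw [show (3 * m + 2 - 2) / 3 = m by omega, show (3 * l + 2 - 2) / 3 = l by omega] at hF
  rw [show 3 * m + 2 - 1 = m * 3 + 1 by omega, show 3 * l + 2 - 1 = l * 3 + 1 by omega,
    pow_succ, pow_succ, pow_mul, pow_mul, ← hF] at hG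
  obtain rfl : B = D := mul_left_cancel₀ (pow_ne_zero _ (pow_ne_zero _ hB0)) hG
  have hdeg : B.natDegree ≠ 0 := fun h => hB (derivative_of_natDegree_zero h)
  have h := congrArg natDegree hF
  rw [natDegree_pow, natDegree_pow] at h
  rw [Nat.eq_of_mul_eq_mul_right (Nat.pos_of_ne_zero hdeg) h]


theorem Nat.pow_mod_three_eq_two_of_odd {q k : ℕ} (hq : q % 3 = 2) (hk : Odd k) :
    q ^ k % 3 = 2 := by
  obtain ⟨m, rfl⟩ := hk
  rw [Nat.pow_mod, hq, pow_succ, pow_mul, Nat.mul_mod, Nat.pow_mod]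
  simp

theorem stmt3 (Fq : Type*) [Field Fq] [Fintype Fq]
    (hq : Fintype.card Fq % 3 = 2)
    (n : ℕ) (k : Fin n → ℕ) (hodd : ∀ i, Odd (k i)) (hinj : Function.Injective k)
    (A₀ : Polynomial Fq) (hA₀ : A₀.coeff 0 ≠ 0)
    (hdvd : ∀ i, (X ^ (k i) - 1 : Polynomial Fq) ∣ A₀)
    (A : Polynomial Fq)
    (hA : A = ∑ j ∈ Finset.range (A₀.natDegree + 1),
      C (A₀.coeff j) * X ^ (Fintype.card Fq) ^ j) :
    ∃ P : Fin n → Polynomial Fq × Polynomial Fq, Function.Injective P ∧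
      ∀ i, (P i).2 ^ 2 - (P i).2 = A * (P i).1 ^ 3 ∧ derivative (P i).2 ≠ 0 := by
  choose b hb using hdvd
  have hQ i : Fintype.card Fq ^ k i % 3 = 2 := Nat.pow_mod_three_eq_two_of_odd hq (hodd i)
  have hder i : derivative (additivePoly (b i)) ≠ 0 := by
    rw [derivative_additivePoly, Ne, C_eq_zero]
    intro h
    rw [hb i, mul_coeff_zero, h, mul_zero] at hA₀
    exact hA₀ rfl
  refine ⟨fun i => (additivePoly (b i) ^ ((Fintype.card Fq ^ k i - 2) / 3),
    additivePoly (b i) ^ (Fintype.card Fq ^ k i - 1)), fun i j hij => ?_, fun i => ⟨?_, ?_⟩⟩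
  · obtain ⟨hF, hG⟩ := Prod.mk.inj hij
    exact hinj (Nat.pow_right_injective Fintype.one_lt_card
      (eq_of_cubicTwist_points_eq (hder i) (hQ i) (hQ j) hF hG))
  · rw [hA, ← additivePoly_eq_sum, hb i, additivePoly_X_pow_sub_one_mul]
    exact cubicTwist_point_of_pow_sub (hQ i) _
  · exact derivative_pow_card_pow_sub_one_ne_zero (hodd i).pos.ne' (hder i)
end

section
/- Let q be an odd prime power, let f ∈ 𝔽_q[x] be a squarefree polynomial of degree 3, and let A ∈ 𝔽_q[t] be a squarefree polynomial of odd degree d > 1. Suppose F, G ∈ 𝔽_q[t] satisfy A·G² = f(F) and F′ ≠ 0. Then G divides F′ in 𝔽_q[t], and d ≤ 3·deg F and deg F ≤ d − 2 (i.e., d/3 ≤ deg F < d − 1). -/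
open Polynomial

/-- If the square of G divides f(F) with f separable, then G divides the derivative of F. -/
theorem dvd_derivative_of_mul_sq_eq_comp {K : Type*} [Field K] {f A F G : K[X]}
    (hf : f.Separable) (h : A * G ^ 2 = f.comp F) : G ∣ derivative F := by
  have hcop : IsCoprime (f.comp F) ((derivative f).comp F) := by
    simpa using IsCoprime.map hf (compRingHom F)
  have hG : G ∣ f.comp F := ⟨A * G, by rw [← h]; ring⟩
  have hd : G ∣ derivative F * (derivative f).comp F := by
    rw [← derivative_comp, ← h]
    refine ⟨derivative A * G + A * (2 * derivative G), ?_⟩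
    simp only [sq, derivative_mul]
    ring
  exact (hcop.of_isCoprime_of_dvd_left hG).dvd_of_dvd_mul_right hd

theorem stmt4 (Fq : Type*) [Field Fq] [Fintype Fq] (hq : Odd (Fintype.card Fq))
    (f : Polynomial Fq) (hf : Squarefree f) (hf3 : f.natDegree = 3)
    (A : Polynomial Fq) (hA : Squarefree A) (hAodd : Odd A.natDegree)
    (hAd : 1 < A.natDegree)
    (F G : Polynomial Fq) (hpt : A * G ^ 2 = f.comp F) (hsep : derivative F ≠ 0) :
    G ∣ derivative F ∧ A.natDegree ≤ 3 * F.natDegree ∧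
      F.natDegree ≤ A.natDegree - 2 := by
  have hdvd : G ∣ derivative F :=
    dvd_derivative_of_mul_sq_eq_comp (PerfectField.separable_iff_squarefree.mpr hf) hpt
  have hG0 : G ≠ 0 := ne_zero_of_dvd_ne_zero hsep hdvd
  have hF0 : F.natDegree ≠ 0 := fun h0 => hsep (derivative_of_natDegree_zero h0)
  have hdeg : A.natDegree + 2 * G.natDegree = 3 * F.natDegree := by
    have h := congrArg natDegree hpt
    rwa [natDegree_mul hA.ne_zero (pow_ne_zero 2 hG0), natDegree_pow, natDegree_comp, hf3] at h
  have hGle : G.natDegree ≤ (derivative F).natDegree := natDegree_le_of_dvd hdvd hsep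
  have hlt : (derivative F).natDegree < F.natDegree := natDegree_derivative_lt hF0
  exact ⟨hdvd, by omega, by omega⟩
end

section
/- Let p be an odd prime, q = p^l a power of p, and n a positive integer. Let f ∈ 𝔽_{q^n}[x] be a monic squarefree polynomial of degree 3. Then the following are equivalent: (i) there exist F, G ∈ 𝔽_{q^n}[t] with (t^{q^n} − t)·G² = f(F), F′ ≠ 0, and 2·deg F ≤ q^n − 1; (ii) p ≡ 3 (mod 4) and there exist r ∈ 𝔽_{q^n} and a ∈ 𝔽_{q^n}^× such that f(x + r) = x³ − a²·x (equivalently, the elliptic curve y² = f(x) is isomorphic over 𝔽_{q^n} to a·y² = x³ − x for some a ∈ 𝔽_{q^n}). -/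
open Polynomial

theorem succ_mul_coeff_pow_mul_derivative {R : Type*} [CommRing R] (F : R[X]) (i n : ℕ) :
    ((i + 1 : ℕ) : R) * (F ^ i * derivative F).coeff n =
      ((n + 1 : ℕ) : R) * (F ^ (i + 1)).coeff (n + 1) := by
  have h := coeff_derivative (F ^ (i + 1)) n
  rw [derivative_pow_succ, mul_assoc, coeff_C_mul] at h
  push_cast
  rw [h, mul_comm]

theorem exists_lift_charZero {k : Type*} [CommRing k] (F : k[X]) :
    ∃ F' : (MvPolynomial k ℤ)[X],
      F'.map (MvPolynomial.eval₂Hom (Int.castRingHom k) id) = F := by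
  refine map_surjective _ (fun x => ⟨MvPolynomial.X x, ?_⟩) F
  simp

theorem coeff_pow_mul_derivative_eq_zero {k : Type*} [Field k] (p : ℕ) [Fact p.Prime] [CharP k p]
    (F : k[X]) {i m : ℕ} (hi : ¬ p ^ m ∣ i + 1) (j : ℕ) :
    (F ^ i * derivative F).coeff (p ^ m * (j + 1) - 1) = 0 := by
  have hp : p.Prime := Fact.out
  obtain ⟨F', rfl⟩ := exists_lift_charZero F
  set φ := MvPolynomial.eval₂Hom (Int.castRingHom k) id
  obtain ⟨a, u, hu, hau⟩ := Nat.exists_eq_pow_mul_and_not_dvd (Nat.succ_ne_zero i) p hp.ne_one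
  have ham : a < m := by
    by_contra! h
    exact hi (((pow_dvd_pow p h).mul_right u).trans (dvd_of_eq hau.symm))
  obtain ⟨e, rfl⟩ := Nat.exists_eq_add_of_lt ham
  have hn : p ^ (a + e + 1) * (j + 1) - 1 + 1 = p ^ (a + e + 1) * (j + 1) :=
    Nat.sub_add_cancel (Nat.mul_pos (pow_pos hp.pos _) j.succ_pos)
  have h := succ_mul_coeff_pow_mul_derivative F' i (p ^ (a + e + 1) * (j + 1) - 1)
  rw [hn] at h
  have hpa : ((p : MvPolynomial k ℤ) ^ a) ≠ 0 := pow_ne_zero _ (Nat.cast_ne_zero.2 hp.ne_zero)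
  have h' : (u : MvPolynomial k ℤ) *
      (F' ^ i * derivative F').coeff (p ^ (a + e + 1) * (j + 1) - 1) =
        p * (p ^ e * (j + 1) * (F' ^ (i + 1)).coeff (p ^ (a + e + 1) * (j + 1))) := by
    apply mul_left_cancel₀ hpa
    rw [show i + 1 = p ^ a * u from hau] at h ⊢
    push_cast at h
    rw [← mul_assoc, h]
    ring
  have h'' := congrArg φ h'
  rw [map_mul, map_mul, map_natCast, map_natCast, CharP.cast_eq_zero k p, zero_mul] at h''
  have hu' : (u : k) ≠ 0 := fun h0 => hu ((CharP.cast_eq_zero_iff k p u).1 h0)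
  rw [← Polynomial.map_pow, derivative_map, ← Polynomial.map_mul, coeff_map]
  exact (mul_eq_zero.1 h'').resolve_left hu'

theorem coeff_pow_card_sub_one_mul_derivative {k : Type*} [Field k] [Fintype k]
    (F : k[X]) (j : ℕ) :
    (F ^ (Fintype.card k - 1) * derivative F).coeff (Fintype.card k * (j + 1) - 1) =
      (derivative F).coeff j := by
  have hQ : 0 < Fintype.card k := Fintype.card_pos
  have hb : (F ^ Fintype.card k).coeff (Fintype.card k * (j + 1)) = F.coeff (j + 1) := by
    rw [← FiniteField.expand_card, mul_comm, coeff_expand_mul hQ]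
  obtain ⟨F', rfl⟩ := exists_lift_charZero F
  generalize Fintype.card k = Q at *
  set φ := MvPolynomial.eval₂Hom (Int.castRingHom k) id
  have h := succ_mul_coeff_pow_mul_derivative F' (Q - 1) (Q * (j + 1) - 1)
  rw [Nat.sub_add_cancel (Nat.mul_pos hQ j.succ_pos), Nat.sub_add_cancel hQ, Nat.cast_mul,
    mul_assoc] at h
  have h' := congrArg φ (mul_left_cancel₀ (Nat.cast_ne_zero.2 hQ.ne') h)
  rw [← Polynomial.map_pow, coeff_map, coeff_map] at hb
  rw [← Polynomial.map_pow, derivative_map, ← Polynomial.map_mul, coeff_map, h', map_mul, hb,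
    coeff_map, coeff_derivative, map_mul, mul_comm]
  simp

theorem coeff_comp_mul_derivative {k : Type*} [Field k] [Fintype k] {g F : k[X]}
    (hg : g.natDegree + 1 < 2 * Fintype.card k) (j : ℕ) :
    (g.comp F * derivative F).coeff (Fintype.card k * (j + 1) - 1) =
      g.coeff (Fintype.card k - 1) * (derivative F).coeff j := by
  obtain ⟨p, hchar⟩ := CharP.exists k
  obtain ⟨m, hp, hm⟩ := FiniteField.card k p
  have : Fact p.Prime := ⟨hp⟩
  have hQ : 0 < Fintype.card k := Fintype.card_pos
  have hvanish : ∀ i, i ≤ g.natDegree → i ≠ Fintype.card k - 1 →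
      (F ^ i * derivative F).coeff (Fintype.card k * (j + 1) - 1) = 0 := by
    intro i hi hne
    rw [hm]
    apply coeff_pow_mul_derivative_eq_zero
    rw [← hm]
    rintro ⟨c, hc⟩
    rcases c with _ | _ | c
    · omega
    · omega
    · have : Fintype.card k * 2 ≤ Fintype.card k * (c + 1 + 1) := Nat.mul_le_mul_left _ (by omega)
      omega
  rw [comp_eq_sum_left, sum_over_range _ (by simp), Finset.sum_mul, finsetSum_coeff]
  simp only [mul_assoc, coeff_C_mul]
  rw [Finset.sum_eq_single (Fintype.card k - 1), coeff_pow_card_sub_one_mul_derivative]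
  · intro i hi hne
    rw [hvanish i (by simpa [Nat.lt_succ_iff] using hi) hne, mul_zero]
  · intro hi
    rw [Finset.mem_range] at hi
    rw [coeff_eq_zero_of_natDegree_lt (by omega), zero_mul]

theorem coeff_expand_mul_eq_zero {R : Type*} [CommSemiring R] {Q : ℕ} (A : R[X]) {B : R[X]}
    (hB : B.natDegree + 1 < Q) (j : ℕ) :
    (expand R Q A * B).coeff (Q * (j + 1) - 1) = 0 := by
  rw [coeff_mul]
  refine Finset.sum_eq_zero fun x hx => ?_
  rw [Finset.HasAntidiagonal.mem_antidiagonal] at hx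
  rw [coeff_expand (by omega)]
  split_ifs with h
  · obtain ⟨c, hc⟩ := h
    rw [coeff_eq_zero_of_natDegree_lt (p := B), mul_zero]
    by_contra! hle
    have hpos : 0 < Q * (j + 1) := Nat.mul_pos (by omega) j.succ_pos
    have hlt : Q * c < Q * (j + 1) := by omega
    have hcj : c < j + 1 := lt_of_mul_lt_mul_left hlt (Nat.zero_le _)
    have : Q * (c + 1) ≤ Q * (j + 1) := Nat.mul_le_mul_left _ hcj
    rw [mul_add] at this
    omega
  · rw [zero_mul]

theorem coeff_X_pow_sub_X_pow_mul_expand {R : Type*} [CommRing R] {Q M : ℕ} (G : R[X]) {H : R[X]}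
    (hH : M + H.natDegree + 1 < Q) (j : ℕ) :
    ((X ^ Q - X) ^ M * expand R Q G * H).coeff (Q * (j + 1) - 1) = 0 := by
  rw [sub_eq_add_neg, add_pow, Finset.sum_mul, Finset.sum_mul, finsetSum_coeff]
  refine Finset.sum_eq_zero fun b _ => ?_
  have hrw : (X ^ Q) ^ b * (-X) ^ (M - b) * ((M.choose b : ℕ) : R[X]) * expand R Q G * H =
      expand R Q (X ^ b * C ((-1) ^ (M - b) * (M.choose b : R)) * G) * (X ^ (M - b) * H) := by
    simp only [map_mul, map_pow, expand_X, map_neg, map_one, map_natCast]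
    rw [neg_pow]
    ring
  rw [hrw]
  apply coeff_expand_mul_eq_zero
  have h1 : (X ^ (M - b) * H).natDegree ≤ (M - b) + H.natDegree :=
    natDegree_mul_le.trans (Nat.add_le_add_right (natDegree_X_pow_le _) _)
  omega

/-- The Hasse invariant of a cubic `f` vanishes as soon as the quadratic twist of `y ^ 2 = f x` by
`X ^ Q - X` has a separable integral point whose differential `H dt / s` is regular. -/
theorem coeff_pow_half_eq_zero {k : Type*} [Field k] [Fintype k] {f F G H : k[X]} {M : ℕ}
    (hM : Fintype.card k = 2 * M + 1) (hf : f.natDegree ≤ 3)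
    (hFG : (X ^ Fintype.card k - X) * G ^ 2 = f.comp F) (hF : derivative F ≠ 0)
    (hH : derivative F = G * H) (hdeg : M + H.natDegree + 1 < Fintype.card k) :
    (f ^ M).coeff (Fintype.card k - 1) = 0 := by
  obtain ⟨j, hj⟩ : ∃ j, (derivative F).coeff j ≠ 0 := by
    by_contra! h
    exact hF (Polynomial.ext (by simpa using h))
  have hnat : (f ^ M).natDegree + 1 < 2 * Fintype.card k := by
    have h1 : (f ^ M).natDegree ≤ M * f.natDegree := natDegree_pow_le
    have h2 : M * f.natDegree ≤ M * 3 := Nat.mul_le_mul_left _ hf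
    omega
  have h := coeff_comp_mul_derivative (F := F) hnat j
  have hprod : (f ^ M).comp F * derivative F =
      (X ^ Fintype.card k - X) ^ M * expand k (Fintype.card k) G * H := by
    rw [pow_comp, ← hFG, FiniteField.expand_card, hH, mul_pow, ← pow_mul,
      show G ^ Fintype.card k = G ^ (2 * M) * G by rw [← pow_succ, hM]]
    ring
  rw [hprod, coeff_X_pow_sub_X_pow_mul_expand G hdeg] at h
  exact (mul_eq_zero.1 h.symm).resolve_right hj

theorem exists_pow_eq_and_not_dvd_choose {p : ℕ} (hp : p.Prime) (hp4 : p % 4 = 1) (m : ℕ) :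
    ∃ c, p ^ m = 4 * c + 1 ∧ ¬ p ∣ (2 * c).choose c := by
  have : Fact p.Prime := ⟨hp⟩
  obtain ⟨e, he⟩ : ∃ e, p = 4 * e + 1 := ⟨p / 4, by omega⟩
  induction m with
  | zero => exact ⟨0, by simp, by simpa using hp.ne_one⟩
  | succ m ih =>
    obtain ⟨c, hc, hnd⟩ := ih
    refine ⟨p * c + e, ?_, fun hdvd => ?_⟩
    · rw [pow_succ, hc]
      linear_combination he
    · have hmod := Choose.choose_modEq_choose_mod_mul_choose_div_nat
        (n := 2 * (p * c + e)) (k := p * c + e) (p := p)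
      have hpos := hp.pos
      rw [show 2 * (p * c + e) = p * (2 * c) + 2 * e by ring] at hmod hdvd
      rw [Nat.mul_add_mod, Nat.mul_add_mod, Nat.mul_add_div hpos, Nat.mul_add_div hpos,
        Nat.mod_eq_of_lt (by omega : 2 * e < p), Nat.mod_eq_of_lt (by omega : e < p),
        Nat.div_eq_of_lt (by omega : 2 * e < p), Nat.div_eq_of_lt (by omega : e < p),
        add_zero, add_zero] at hmod
      rcases hp.dvd_mul.1 ((hmod.dvd_iff dvd_rfl).1 hdvd) with h | h
      · have hfact : p ∣ (2 * e).factorial := by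
          rw [← Nat.choose_mul_factorial_mul_factorial (by omega : e ≤ 2 * e), mul_assoc]
          exact h.mul_right _
        have := (hp.dvd_factorial).1 hfact
        omega
      · exact hnd h

theorem coeff_cubic_pow {k : Type*} [CommRing k] (b : k) (c : ℕ) :
    ((X ^ 3 - C b * X : k[X]) ^ (2 * c)).coeff (4 * c) = (-b) ^ c * ((2 * c).choose c : k) := by
  have h : (X ^ 3 - C b * X : k[X]) ^ (2 * c) =
      expand k 2 ((X + C (-b)) ^ (2 * c)) * X ^ (2 * c) := by
    simp only [map_pow, map_add, expand_X, expand_C, ← mul_pow]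
    congr 1
    simp only [map_neg]
    ring
  rw [h, show 4 * c = c * 2 + 2 * c by ring, coeff_mul_X_pow, coeff_expand_mul two_pos,
    coeff_X_add_C_pow]
  congr 2
  omega

theorem exists_separable_point {k : Type*} [Field k] [Fintype k] {p m : ℕ} (hp : p.Prime)
    (hp4 : p % 4 = 3) (hcard : Fintype.card k = p ^ (m + 1)) {a : k} (ha : a ≠ 0) :
    ∃ F G : k[X], (X ^ p ^ (m + 1) - X) * G ^ 2 = F ^ 3 - C (a ^ 2) * F ∧
      derivative F ≠ 0 ∧ 2 * F.natDegree ≤ p ^ (m + 1) - 1 := by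
  have : Fact p.Prime := ⟨hp⟩
  have : CharP k p := charP_of_card_eq_prime_pow hcard
  obtain ⟨e, rfl⟩ : ∃ e, p = 4 * e + 3 := ⟨p / 4, by omega⟩
  set p := 4 * e + 3 with hpe
  set S : k[X] := ∑ i ∈ Finset.range (m + 1), (C a⁻¹ * X) ^ p ^ i with hS
  have hSp : S ^ p - S = C a⁻¹ * (X ^ p ^ (m + 1) - X) := by
    rw [hS, sum_pow_char p]
    simp only [← pow_mul, ← pow_succ]
    rw [← Finset.sum_sub_distrib, Finset.sum_range_sub fun i => (C a⁻¹ * X : k[X]) ^ p ^ i,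
      mul_pow, ← C_pow, ← hcard, FiniteField.pow_card]
    simp only [pow_zero, pow_one]
    ring
  have hS' : derivative S = C a⁻¹ := by
    rw [hS, derivative_sum, Finset.sum_range_succ', Finset.sum_eq_zero]
    · simp
    · intro i _
      rw [pow_succ, pow_mul, derivative_pow, CharP.cast_eq_zero k p]
      simp
  have hS0 : S ≠ 0 := by
    intro h
    rw [h, derivative_zero] at hS'
    exact C_ne_zero.2 (inv_ne_zero ha) hS'.symm
  have hSdeg : S.natDegree ≤ p ^ m := by
    refine natDegree_sum_le_of_forall_le _ _ fun i hi => ?_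
    refine (natDegree_pow_le_of_le _ ((natDegree_C_mul_le _ _).trans natDegree_X_le)).trans ?_
    rw [mul_one]
    exact Nat.pow_le_pow_right hp.pos (Nat.lt_succ_iff.1 (Finset.mem_range.1 hi))
  refine ⟨C a * S ^ (2 * e + 1), C a * S ^ e, ?_, ?_, ?_⟩
  · have hC : C a * C a⁻¹ = (1 : k[X]) := by rw [← C_mul, mul_inv_cancel₀ ha, C_1]
    have hN : (X ^ p ^ (m + 1) - X : k[X]) = C a * (S ^ p - S) := by
      rw [hSp, ← mul_assoc, hC, one_mul]
    rw [hN, hpe, C_pow]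
    ring
  · rw [derivative_C_mul, derivative_pow_succ, hS']
    have h2e : ((2 * e : ℕ) + 1 : k) ≠ 0 := by
      intro h
      have : ((2 * e + 1 : ℕ) : k) = 0 := by exact_mod_cast h
      rw [CharP.cast_eq_zero_iff k p] at this
      have := Nat.le_of_dvd (by omega) this
      omega
    have h2e' : (C ((2 * e : ℕ) + 1 : k)) ≠ 0 := C_ne_zero.2 h2e
    exact mul_ne_zero (C_ne_zero.2 ha)
      (mul_ne_zero (mul_ne_zero h2e' (pow_ne_zero _ hS0)) (C_ne_zero.2 (inv_ne_zero ha)))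
  · have h1 : (C a * S ^ (2 * e + 1)).natDegree ≤ (2 * e + 1) * p ^ m :=
      (natDegree_C_mul_le _ _).trans (natDegree_pow_le_of_le _ hSdeg)
    have h2 : p ^ (m + 1) = 2 * ((2 * e + 1) * p ^ m) + p ^ m := by
      rw [pow_succ, mul_comm (p ^ m) p]
      nth_rewrite 1 [hpe]
      ring
    have h3 : 0 < p ^ m := pow_pos hp.pos m
    omega

theorem card_le_natDegree_of_eval_eq_zero {k : Type*} [Field k] {P : k[X]} (hP : P ≠ 0)
    {s : Finset k} (hs : ∀ α ∈ s, P.eval α = 0) : s.card ≤ P.natDegree :=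
  card_le_degree_of_subset_roots fun α hα => (mem_roots hP).2 (hs α hα)

theorem card_fiber_le_natDegree {k : Type*} [Field k] [Fintype k] [DecidableEq k] {F : k[X]}
    (hF : F.natDegree ≠ 0) (e : k) :
    ({α | F.eval α = e} : Finset k).card ≤ F.natDegree := by
  rw [← natDegree_sub_C (a := e)]
  refine card_le_natDegree_of_eval_eq_zero (fun h => hF ?_) fun α hα => ?_
  · rw [sub_eq_zero.1 h, natDegree_C]
  · simpa [sub_eq_zero] using hα

theorem exists_derivative_eq_mul {k : Type*} [Field k] [Fintype k] {f F G : k[X]}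
    (hf : f.Separable) (hG : G ≠ 0)
    (hFG : (X ^ Fintype.card k - X) * G ^ 2 = f.comp F) :
    ∃ H, derivative F = G * H ∧
      2 * (X ^ Fintype.card k - X) * derivative G - G = (derivative f).comp F * H := by
  have hder : derivative (X ^ Fintype.card k - X : k[X]) = -1 := by
    simp [derivative_X_pow]
  have hd := congrArg derivative hFG
  rw [derivative_mul, hder, derivative_pow, derivative_comp] at hd
  simp only [Nat.cast_ofNat, C_ofNat] at hd
  have hcop : IsCoprime G ((derivative f).comp F) := by
    obtain ⟨u, v, huv⟩ := hf
    refine ⟨u.comp F * ((X ^ Fintype.card k - X) * G), v.comp F, ?_⟩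
    have := congrArg (fun P : k[X] => P.comp F) huv
    simp only [add_comp, mul_comp, one_comp, ← hFG] at this
    rw [← this]
    ring
  have hdvd : G ∣ (derivative f).comp F * derivative F := by
    refine ⟨2 * (X ^ Fintype.card k - X) * derivative G - G, ?_⟩
    rw [mul_comm, ← hd]
    ring
  obtain ⟨H, hH⟩ := hcop.dvd_of_dvd_mul_left hdvd
  refine ⟨H, hH, mul_left_cancel₀ hG ?_⟩
  rw [hH] at hd
  linear_combination hd

theorem exists_three_roots {k : Type*} [Field k] [Fintype k] [DecidableEq k] {f F : k[X]}
    (hfm : f.Monic) (hf3 : f.natDegree = 3) (hF : F.natDegree ≠ 0)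
    (hroot : ∀ α, f.eval (F.eval α) = 0) (hdeg : 2 * F.natDegree < Fintype.card k) :
    ∃ e₁ e₂ e₃ : k, f = (X - C e₁) * (X - C e₂) * (X - C e₃) ∧
      e₁ ≠ e₂ ∧ e₁ ≠ e₃ ∧ e₂ ≠ e₃ ∧
      Fintype.card k = ({α | F.eval α = e₁} : Finset k).card +
        ({α | F.eval α = e₂} : Finset k).card + ({α | F.eval α = e₃} : Finset k).card := by
  have hmaps : ∀ α ∈ (Finset.univ : Finset k), F.eval α ∈ f.roots.toFinset := fun α _ => by
    rw [Multiset.mem_toFinset]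
    exact (mem_roots hfm.ne_zero).2 (hroot α)
  have hle := Finset.card_le_mul_card_image_of_maps_to hmaps F.natDegree
    fun e _ => card_fiber_le_natDegree hF e
  have h1 : f.roots.toFinset.card ≤ f.roots.card := Multiset.toFinset_card_le _
  have h2 : f.roots.card ≤ 3 := hf3 ▸ card_roots' f
  rw [Finset.card_univ] at hle
  have h3 : 3 ≤ f.roots.toFinset.card := by
    by_contra! h
    have := Nat.mul_le_mul_left F.natDegree (Nat.lt_succ_iff.1 h)
    omega
  have hroots : f.roots.toFinset.val = f.roots :=
    Multiset.eq_of_le_of_card_le (Multiset.dedup_le _) (h2.trans h3)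
  obtain ⟨e₁, e₂, e₃, h12, h13, h23, hset⟩ := Finset.card_eq_three.1 (le_antisymm (h1.trans h2) h3)
  have hprod := prod_multiset_X_sub_C_of_monic_of_roots_card_eq hfm (by omega)
  refine ⟨e₁, e₂, e₃, ?_, h12, h13, h23, ?_⟩
  · rw [← hroots, hset] at hprod
    rw [← hprod]
    change ∏ e ∈ {e₁, e₂, e₃}, (X - C e) = _
    rw [Finset.prod_insert (by simp [h12, h13]), Finset.prod_pair h23, mul_assoc]
  · rw [← Finset.card_univ, Finset.card_eq_sum_card_fiberwise hmaps, hset,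
      Finset.sum_insert (by simp [h12, h13]), Finset.sum_pair h23, add_assoc]

theorem comp_X_add_C_eq_of_derivative_eval_eq {k : Type*} [Field k] {e₁ e₂ e₃ : k} {f : k[X]}
    (hf : f = (X - C e₁) * (X - C e₂) * (X - C e₃)) (h12 : e₁ ≠ e₂) (h13 : e₁ ≠ e₃)
    (h : (derivative f).eval e₁ = (derivative f).eval e₂) :
    ∃ r a : k, a ≠ 0 ∧ f.comp (X + C r) = X ^ 3 - C (a ^ 2) * X := by
  refine ⟨e₃, e₁ - e₃, sub_ne_zero.2 h13, ?_⟩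
  have hsum : e₂ - e₃ = -(e₁ - e₃) := by
    subst hf
    simp only [derivative_mul, derivative_sub, derivative_X, derivative_C, eval_add, eval_mul,
      eval_sub, eval_X, eval_C, eval_one, eval_zero] at h
    refine mul_left_cancel₀ (sub_ne_zero.2 h12) ?_
    linear_combination h
  have h2 : (X + C e₃ - C e₂ : k[X]) = X + C (e₁ - e₃) := by
    rw [add_sub_assoc, ← C_sub, ← neg_sub e₂ e₃, hsum, neg_neg]
  have h1 : (X + C e₃ - C e₁ : k[X]) = X - C (e₁ - e₃) := by
    rw [C_sub]
    ring
  rw [hf, mul_comp, mul_comp, sub_comp, sub_comp, sub_comp, X_comp, C_comp, C_comp, C_comp, h1, h2,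
    C_pow]
  ring

theorem exists_comp_X_add_C_eq {k : Type*} [Field k] [Fintype k] {f F G H : k[X]}
    (hfm : f.Monic) (hf3 : f.natDegree = 3)
    (hFG : (X ^ Fintype.card k - X) * G ^ 2 = f.comp F) (hF : F.natDegree ≠ 0)
    (hH : H ≠ 0)
    (hGH : 2 * (X ^ Fintype.card k - X) * derivative G - G = (derivative f).comp F * H)
    (hdG : 2 * G.natDegree + F.natDegree + 2 ≤ Fintype.card k)
    (hdH : 2 * H.natDegree + F.natDegree + 2 ≤ Fintype.card k)
    (hdeg : 2 * F.natDegree < Fintype.card k) :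
    ∃ r a : k, a ≠ 0 ∧ f.comp (X + C r) = X ^ 3 - C (a ^ 2) * X := by
  classical
  have hN : ∀ α : k, α ^ Fintype.card k - α = 0 := fun α => by rw [FiniteField.pow_card, sub_self]
  have hroot : ∀ α, f.eval (F.eval α) = 0 := fun α => by
    rw [← eval_comp, ← hFG]
    simp [hN]
  obtain ⟨e₁, e₂, e₃, hf, h12, h13, h23, hcard⟩ := exists_three_roots hfm hf3 hF hroot hdeg
  have hfib : ∀ e, G + C ((derivative f).eval e) * H = 0 ∨
      2 * ({α | F.eval α = e} : Finset k).card + F.natDegree + 2 ≤ Fintype.card k := fun e => by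
    refine or_iff_not_imp_left.2 fun hne => ?_
    have hc := card_le_natDegree_of_eval_eq_zero (s := {α | F.eval α = e}) hne fun α hα => by
      have hα' : F.eval α = e := by simpa using hα
      have := congrArg (eval α) hGH
      simp only [eval_sub, eval_mul, eval_comp, eval_pow, eval_X, hN, hα'] at this
      simp only [eval_add, eval_mul, eval_C]
      linear_combination -this
    have hd := natDegree_add_le_of_le le_rfl (natDegree_C_mul_le ((derivative f).eval e) H)
      (p := G)
    rcases le_max_iff.1 (hc.trans hd) with h | h <;> omega
  have hpair : ∀ {e e' : k}, G + C ((derivative f).eval e) * H = 0 →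
      G + C ((derivative f).eval e') * H = 0 → (derivative f).eval e = (derivative f).eval e' :=
    fun {e e'} h h' => C_injective (mul_right_cancel₀ hH (by linear_combination h - h'))
  have l1 := card_fiber_le_natDegree hF e₁
  have l2 := card_fiber_le_natDegree hF e₂
  have l3 := card_fiber_le_natDegree hF e₃
  rcases hfib e₁ with g1 | g1 <;> rcases hfib e₂ with g2 | g2
  · exact comp_X_add_C_eq_of_derivative_eval_eq hf h12 h13 (hpair g1 g2)
  · rcases hfib e₃ with g3 | g3
    · exact comp_X_add_C_eq_of_derivative_eval_eq (e₃ := e₂) (by rw [hf]; ring) h13 h12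
        (hpair g1 g3)
    · omega
  · rcases hfib e₃ with g3 | g3
    · exact comp_X_add_C_eq_of_derivative_eval_eq (e₃ := e₁) (by rw [hf]; ring) h23 h12.symm
        (hpair g2 g3)
    · omega
  · omega

theorem mod_four_eq_three_and_exists_comp_eq {k : Type*} [Field k] [Fintype k] {p m : ℕ}
    (hp : p.Prime) (hp2 : p ≠ 2) (hcard : Fintype.card k = p ^ m) {f F G : k[X]} (hfm : f.Monic)
    (hf : Squarefree f) (hf3 : f.natDegree = 3)
    (hFG : (X ^ Fintype.card k - X) * G ^ 2 = f.comp F) (hF : derivative F ≠ 0)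
    (hdeg : 2 * F.natDegree < Fintype.card k) :
    p % 4 = 3 ∧ ∃ r a : k, a ≠ 0 ∧ f.comp (X + C r) = X ^ 3 - C (a ^ 2) * X := by
  have : Fact p.Prime := ⟨hp⟩
  have : CharP k p := charP_of_card_eq_prime_pow hcard
  have hd0 : F.natDegree ≠ 0 := fun h => hF (derivative_of_natDegree_zero h)
  have hcomp : (f.comp F).natDegree = 3 * F.natDegree := by rw [natDegree_comp, hf3]
  have hG : G ≠ 0 := by
    rintro rfl
    rw [zero_pow two_ne_zero, mul_zero] at hFG
    rw [← hFG, natDegree_zero] at hcomp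
    omega
  have hGdeg : Fintype.card k + 2 * G.natDegree = 3 * F.natDegree := by
    rw [← hcomp, ← hFG, natDegree_mul (FiniteField.X_pow_card_sub_X_ne_zero k Fintype.one_lt_card)
      (pow_ne_zero _ hG), FiniteField.X_pow_card_sub_X_natDegree_eq k Fintype.one_lt_card,
      natDegree_pow]
  obtain ⟨H, hFH, hGH⟩ :=
    exists_derivative_eq_mul (PerfectField.separable_iff_squarefree.2 hf) hG hFG
  have hH : H ≠ 0 := by
    rintro rfl
    exact hF (by rw [hFH, mul_zero])
  have hHdeg : G.natDegree + H.natDegree < F.natDegree := by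
    rw [← natDegree_mul hG hH, ← hFH]
    exact natDegree_derivative_lt hd0
  obtain ⟨r, a, ha, hra⟩ :=
    exists_comp_X_add_C_eq hfm hf3 hFG hd0 hH hGH (by omega) (by omega) hdeg
  refine ⟨?_, r, a, ha, hra⟩
  have hodd : p % 2 = 1 := hp.eq_two_or_odd.resolve_left hp2
  by_contra hp3
  obtain ⟨c, hc, hndvd⟩ := exists_pow_eq_and_not_dvd_choose hp (by omega) m
  rw [← hcard] at hc
  have hshift : (X ^ Fintype.card k - X) * G ^ 2 = (X ^ 3 - C (a ^ 2) * X).comp (F - C r) := by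
    rw [← hra, comp_assoc, hFG]
    simp
  have hFr : derivative (F - C r) = derivative F := by simp
  have hzero := coeff_pow_half_eq_zero (M := 2 * c) (by omega)
    (by rw [← hra, natDegree_comp, hf3, natDegree_X_add_C]) hshift (hFr ▸ hF) (hFr.trans hFH)
    (by omega)
  rw [hc, Nat.add_sub_cancel, coeff_cubic_pow] at hzero
  rcases mul_eq_zero.1 hzero with h | h
  · exact pow_ne_zero _ (neg_ne_zero.2 (pow_ne_zero 2 ha)) h
  · exact hndvd ((CharP.cast_eq_zero_iff k p _).1 h)

theorem stmt6 (p l n : ℕ) (hp : p.Prime) (hpodd : p ≠ 2) (hl : 0 < l) (hn : 0 < n)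
    (Fqn : Type*) [Field Fqn] [Fintype Fqn]
    (hcard : Fintype.card Fqn = (p ^ l) ^ n)
    (f : Polynomial Fqn) (hfm : f.Monic) (hf : Squarefree f) (hf3 : f.natDegree = 3) :
    (∃ F G : Polynomial Fqn,
        (X ^ ((p ^ l) ^ n) - X) * G ^ 2 = f.comp F ∧ derivative F ≠ 0 ∧
          2 * F.natDegree ≤ (p ^ l) ^ n - 1) ↔
      (p % 4 = 3 ∧
        ∃ (r a : Fqn), a ≠ 0 ∧ f.comp (X + C r) = X ^ 3 - C (a ^ 2) * X) := by
  constructor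
  · rintro ⟨F, G, hFG, hF, hdeg⟩
    rw [← hcard] at hFG hdeg
    rw [← pow_mul] at hcard
    have hpos : 0 < Fintype.card Fqn := Fintype.card_pos
    exact mod_four_eq_three_and_exists_comp_eq hp hpodd hcard hfm hf hf3 hFG hF (by omega)
  · rintro ⟨hp4, r, a, ha, hra⟩
    obtain ⟨m, hm⟩ := Nat.exists_eq_succ_of_ne_zero (Nat.mul_pos hl hn).ne'
    rw [← pow_mul, hm] at hcard ⊢
    obtain ⟨F, G, hFG, hF, hdeg⟩ := exists_separable_point hp hp4 hcard ha
    refine ⟨F + C r, G, ?_, by simpa using hF, by rwa [natDegree_add_C]⟩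
    have hcomp : f.comp (F + C r) = (f.comp (X + C r)).comp F := by
      rw [comp_assoc]
      simp
    rw [hcomp, hra, Nat.succ_eq_add_one, hFG]
    simp
end

section
/- Let q be a prime power and let n, k be positive integers such that r = (q^n + 1)/(q^k + 1) is an integer. Let a, b, c, d ∈ 𝔽_q and a₀, b₀, c₀, d₀ ∈ 𝔽_q be two quadruples each satisfying the orthogonality conditions a² + c² = 1, b² + d² = 1, ab + cd = 0 (and similarly for a₀, b₀, c₀, d₀). Then the identity (a·t^r + b)^{q^k+1} + (c·t^r + d)^{q^k+1} = (a₀·t + b₀)^{q^n+1} + (c₀·t + d₀)^{q^n+1} holds in 𝔽_q[t]; both sides equal t^{q^n+1} + 1. In particular, the curve (a·t^r+b, c·t^r+d, a₀·t+b₀, c₀·t+d₀) lies on the Hermitian Fermat surface X₀^{q^k+1} + X₁^{q^k+1} = X₂^{q^n+1} + X₃^{q^n+1}. -/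
open Polynomial

/-- Over a finite field with `q` elements, the `q ^ m`-th power map fixes the coefficients of an
affine combination of `P` and `1`. -/
lemma affine_pow_card_pow {K : Type*} [Field K] [Fintype K] (m : ℕ) (a b : K) (P : K[X]) :
    (C a * P + C b) ^ Fintype.card K ^ m = C a * P ^ Fintype.card K ^ m + C b := by
  obtain ⟨p, hp⟩ := CharP.exists K
  obtain ⟨e, hprime, hcard⟩ := FiniteField.card K p
  have : Fact p.Prime := ⟨hprime⟩
  have hpow : Fintype.card K ^ m = p ^ ((e : ℕ) * m) := by rw [hcard, pow_mul]
  rw [hpow, add_pow_char_pow, mul_pow, ← hpow, ← C_pow, ← C_pow, FiniteField.pow_card_pow,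
    FiniteField.pow_card_pow]

/-- An orthogonal change of coordinates preserves the Hermitian form
`x ^ (q ^ m + 1) + y ^ (q ^ m + 1)`, here evaluated at `(P, 1)`. -/
lemma orthogonal_pow_card_pow_add_one {K : Type*} [Field K] [Fintype K] (m : ℕ) {a b c d : K}
    (hac : a ^ 2 + c ^ 2 = 1) (hbd : b ^ 2 + d ^ 2 = 1) (horth : a * b + c * d = 0) (P : K[X]) :
    (C a * P + C b) ^ (Fintype.card K ^ m + 1) + (C c * P + C d) ^ (Fintype.card K ^ m + 1)
      = P ^ (Fintype.card K ^ m + 1) + 1 := by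
  have hac' : (C a : K[X]) ^ 2 + C c ^ 2 = 1 := by simpa using congrArg C hac
  have hbd' : (C b : K[X]) ^ 2 + C d ^ 2 = 1 := by simpa using congrArg C hbd
  have horth' : (C a : K[X]) * C b + C c * C d = 0 := by simpa using congrArg C horth
  simp only [pow_succ _ (Fintype.card K ^ m), affine_pow_card_pow]
  linear_combination P ^ Fintype.card K ^ m * P * hac' + hbd'
    + (P ^ Fintype.card K ^ m + P) * horth'

theorem stmt9 (Fq : Type*) [Field Fq] [Fintype Fq] (n k : ℕ) (hn : 0 < n) (hk : 0 < k)
    (hdvd : (Fintype.card Fq ^ k + 1) ∣ (Fintype.card Fq ^ n + 1))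
    (r : ℕ) (hr : r = (Fintype.card Fq ^ n + 1) / (Fintype.card Fq ^ k + 1))
    (a b c d a₀ b₀ c₀ d₀ : Fq)
    (h1 : a ^ 2 + c ^ 2 = 1) (h2 : b ^ 2 + d ^ 2 = 1) (h3 : a * b + c * d = 0)
    (h1₀ : a₀ ^ 2 + c₀ ^ 2 = 1) (h2₀ : b₀ ^ 2 + d₀ ^ 2 = 1)
    (h3₀ : a₀ * b₀ + c₀ * d₀ = 0) :
    (C a * X ^ r + C b : Polynomial Fq) ^ (Fintype.card Fq ^ k + 1)
        + (C c * X ^ r + C d) ^ (Fintype.card Fq ^ k + 1)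
      = X ^ (Fintype.card Fq ^ n + 1) + 1 ∧
    (C a₀ * X + C b₀ : Polynomial Fq) ^ (Fintype.card Fq ^ n + 1)
        + (C c₀ * X + C d₀) ^ (Fintype.card Fq ^ n + 1)
      = X ^ (Fintype.card Fq ^ n + 1) + 1 := by
  refine ⟨?_, orthogonal_pow_card_pow_add_one n h1₀ h2₀ h3₀ X⟩
  rw [orthogonal_pow_card_pow_add_one k h1 h2 h3, ← pow_mul, hr, Nat.div_mul_cancel hdvd]
end

section
/- Let q be an odd prime power with q ≡ 3 (mod 4), let n be an odd positive integer, let k be a positive divisor of n, and set r = (q^n + 1)/(q^k + 1) (an integer since n/k is odd). Let a, b, c, d ∈ 𝔽_q satisfy a² + c² = 1, b² + d² = 1, ab + cd = 0. Define X₀ = −(c·t^r + d)^{(q^k+1)/2} and Y₀ = (a·t^r + b)^{(q^k+1)/2} · (c·t^r + d)^{(q^k+1)/4} in 𝔽_q[t] (note 4 divides q^k + 1 since q ≡ 3 (mod 4) and k is odd). Then Y₀² = X₀³ − (t^{q^n+1} + 1)·X₀ in 𝔽_q[t]; that is, (X₀, Y₀) is an ∞-integral point of the quartic twist y² = x³ −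 (t^{q^n+1} + 1)·x over 𝔽_q(t). -/
open Polynomial

/-- Raising to the power `|F| ^ k` over a finite field `F` is substitution of `X ^ (|F| ^ k)`. -/
theorem expand_card_pow_eq_pow {F : Type*} [Field F] [Fintype F] (k : ℕ) (f : F[X]) :
    expand F (Fintype.card F ^ k) f = f ^ (Fintype.card F ^ k) := by
  induction k with
  | zero => simp
  | succ k ih => rw [pow_succ', expand_mul, ih, map_pow, FiniteField.expand_card, ← pow_mul]

/-- For `a, b, c, d` forming an orthogonal matrix over a finite field, the norm-type form
`u ^ (Q + 1) + v ^ (Q + 1)` is invariant, where `Q = |F| ^ k`. -/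
theorem pow_add_pow_eq_of_orthogonal {F : Type*} [Field F] [Fintype F] (k r : ℕ)
    {a b c d : F} (h1 : a ^ 2 + c ^ 2 = 1) (h2 : b ^ 2 + d ^ 2 = 1) (h3 : a * b + c * d = 0) :
    (C a * X ^ r + C b) ^ (Fintype.card F ^ k + 1)
      + (C c * X ^ r + C d) ^ (Fintype.card F ^ k + 1)
      = (X ^ (r * (Fintype.card F ^ k + 1)) + 1 : F[X]) := by
  have e1 : (C a ^ 2 + C c ^ 2 : F[X]) = 1 := by simp only [← C_pow, ← C_add, h1, C_1]
  have e2 : (C b ^ 2 + C d ^ 2 : F[X]) = 1 := by simp only [← C_pow, ← C_add, h2, C_1]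
  have e3 : (C a * C b + C c * C d : F[X]) = 0 := by simp only [← C_mul, ← C_add, h3, C_0]
  rw [pow_succ, pow_succ, ← expand_card_pow_eq_pow, ← expand_card_pow_eq_pow]
  simp only [map_add, map_mul, map_pow, expand_C, expand_X]
  rw [mul_add r, mul_one, pow_add, mul_comm r, pow_mul]
  generalize ((X : F[X]) ^ Fintype.card F ^ k) ^ r = T
  linear_combination (T * X ^ r) * e1 + e2 + (T + X ^ r) * e3

theorem stmt10 (Fq : Type*) [Field Fq] [Fintype Fq]
    (hq4 : Fintype.card Fq % 4 = 3)
    (n k : ℕ) (hnodd : Odd n) (hn : 0 < n) (hk : 0 < k) (hkn : k ∣ n)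
    (r : ℕ) (hr : r = (Fintype.card Fq ^ n + 1) / (Fintype.card Fq ^ k + 1))
    (a b c d : Fq)
    (h1 : a ^ 2 + c ^ 2 = 1) (h2 : b ^ 2 + d ^ 2 = 1) (h3 : a * b + c * d = 0)
    (X₀ Y₀ : Polynomial Fq)
    (hX₀ : X₀ = -(C c * X ^ r + C d) ^ ((Fintype.card Fq ^ k + 1) / 2))
    (hY₀ : Y₀ = (C a * X ^ r + C b) ^ ((Fintype.card Fq ^ k + 1) / 2)
        * (C c * X ^ r + C d) ^ ((Fintype.card Fq ^ k + 1) / 4)) :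
    Y₀ ^ 2 = X₀ ^ 3 - (X ^ (Fintype.card Fq ^ n + 1) + 1) * X₀ := by
  obtain ⟨j, rfl⟩ := hkn
  obtain ⟨hkodd, hjodd⟩ := Nat.odd_mul.mp hnodd
  have hdvd : Fintype.card Fq ^ k + 1 ∣ Fintype.card Fq ^ (k * j) + 1 := by
    simpa [pow_mul] using Odd.nat_add_dvd_pow_add_pow (Fintype.card Fq ^ k) 1 hjodd
  have hfour : 4 ∣ Fintype.card Fq ^ k + 1 := by
    have hq : 4 ∣ Fintype.card Fq + 1 := by omega
    exact hq.trans (by simpa using Odd.nat_add_dvd_pow_add_pow (Fintype.card Fq) 1 hkodd)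
  have key := pow_add_pow_eq_of_orthogonal k r h1 h2 h3
  rw [show r * (Fintype.card Fq ^ k + 1) = Fintype.card Fq ^ (k * j) + 1 by
    rw [hr, Nat.div_mul_cancel hdvd]] at key
  obtain ⟨m, hm⟩ := hfour
  rw [← key, hX₀, hY₀, hm, show 4 * m / 2 = 2 * m by omega, show 4 * m / 4 = m by omega]
  ring
end

section
/- Let q be an odd prime power with q ≡ 2 (mod 3), let n be an odd positive integer, let k be a positive divisor of n, and set r = (q^n + 1)/(q^k + 1) (an integer since n/k is odd). Let a, b, c, d ∈ 𝔽_q satisfy a² + c² = 1, b² + d² = 1, ab + cd = 0. Define X₀ = −(c·t^r + d)^{(q^k+1)/3} and Y₀ = (a·t^r + b)^{(q^k+1)/2} in 𝔽_q[t] (note 3 divides q^k + 1 since q ≡ 2 (mod 3) and k is odd, and 2 divides q^k + 1 since q is odd). Then Y₀² = X₀³ + t^{q^n+1} + 1 in 𝔽_q[t]; that is, (X₀, Y₀) is an ∞-integral point of the cubic twist y² = x³ + t^{q^n+1} + 1 over 𝔽_q(t). -/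
open Polynomial

theorem FiniteField.expand_card_pow {K : Type*} [Field K] [Fintype K] (f : K[X]) (k : ℕ) :
    expand K (Fintype.card K ^ k) f = f ^ Fintype.card K ^ k := by
  induction k with
  | zero => simp
  | succ k ih =>
    rw [pow_succ, expand_mul, FiniteField.expand_card, map_pow, ih, ← pow_mul]

theorem FiniteField.linear_pow_card_pow_add_one {K : Type*} [Field K] [Fintype K]
    (a b : K) (r k : ℕ) :
    (C a * X ^ r + C b) ^ (Fintype.card K ^ k + 1) =
      (C a * (X ^ r) ^ Fintype.card K ^ k + C b) * (C a * X ^ r + C b) := by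
  rw [pow_succ, ← FiniteField.expand_card_pow]
  simp only [map_add, map_mul, map_pow, expand_C, expand_X, pow_right_comm _ r]

theorem stmt11 (Fq : Type*) [Field Fq] [Fintype Fq]
    (hqodd : Odd (Fintype.card Fq)) (hq3 : Fintype.card Fq % 3 = 2)
    (n k : ℕ) (hnodd : Odd n) (hn : 0 < n) (hk : 0 < k) (hkn : k ∣ n)
    (r : ℕ) (hr : r = (Fintype.card Fq ^ n + 1) / (Fintype.card Fq ^ k + 1))
    (a b c d : Fq)
    (h1 : a ^ 2 + c ^ 2 = 1) (h2 : b ^ 2 + d ^ 2 = 1) (h3 : a * b + c * d = 0)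
    (X₀ Y₀ : Polynomial Fq)
    (hX₀ : X₀ = -(C c * X ^ r + C d) ^ ((Fintype.card Fq ^ k + 1) / 3))
    (hY₀ : Y₀ = (C a * X ^ r + C b) ^ ((Fintype.card Fq ^ k + 1) / 2)) :
    Y₀ ^ 2 = X₀ ^ 3 + X ^ (Fintype.card Fq ^ n + 1) + 1 := by
  have hkodd : Odd k := hnodd.of_dvd_nat hkn
  have two_dvd : 2 ∣ Fintype.card Fq ^ k + 1 := (hqodd.pow.add_one).two_dvd
  have three_dvd : 3 ∣ Fintype.card Fq ^ k + 1 := by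
    have h : 3 ∣ Fintype.card Fq + 1 := by omega
    exact h.trans (by simpa using hkodd.nat_add_dvd_pow_add_pow (Fintype.card Fq) 1)
  have r_mul : r * (Fintype.card Fq ^ k + 1) = Fintype.card Fq ^ n + 1 := by
    rw [hr]
    apply Nat.div_mul_cancel
    obtain ⟨m, rfl⟩ := hkn
    have hm : Odd m := hnodd.of_dvd_nat (Dvd.intro_left k rfl)
    simpa [pow_mul] using hm.nat_add_dvd_pow_add_pow (Fintype.card Fq ^ k) 1
  have hC1 : (C a ^ 2 + C c ^ 2 : Fq[X]) = 1 := by simpa using congrArg C h1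
  have hC2 : (C b ^ 2 + C d ^ 2 : Fq[X]) = 1 := by simpa using congrArg C h2
  have hC3 : (C a * C b + C c * C d : Fq[X]) = 0 := by simpa using congrArg C h3
  rw [hX₀, hY₀, Odd.neg_pow (by decide), ← pow_mul, ← pow_mul, Nat.div_mul_cancel two_dvd,
    Nat.div_mul_cancel three_dvd, FiniteField.linear_pow_card_pow_add_one,
    FiniteField.linear_pow_card_pow_add_one, ← r_mul, pow_mul, pow_succ (X ^ r : Fq[X])]
  generalize (X ^ r : Fq[X]) ^ Fintype.card Fq ^ k = S
  generalize (X ^ r : Fq[X]) = T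
  linear_combination S * T * hC1 + hC2 + (S + T) * hC3
end

section
/- Let q be a prime power with q ≡ 3 (mod 4) and let m be a positive divisor of q + 1. Then for every positive integer N there exists a positive integer n with the following property: letting K_n = 𝔽_q(t)[s]/(s² − (t^{q^n} − t)) (a field, the function field of the hyperelliptic curve s² = t^{q^n} − t) and letting 𝒪_n be the integral closure of 𝔽_q[t] in K_n, the ideal class group Cl(𝒪_n) contains a subgroup isomorphic to (ℤ/mℤ)^N; that is, there is an injective group homomorphism (ℤ/mℤ)^N → Cl(𝒪_n). In other words, the m-class rank of K_n is arbitrarily large as n varies. -/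
open Polynomial

namespace QuadraticAlgebra

section IntegrallyClosed

variable {κ : Type*} [Field κ] {f : κ[X]}

theorem natDegree_le_natDegree_norm (hf : Odd f.natDegree) {z : QuadraticAlgebra κ[X] f 0}
    (hz : z.im ≠ 0) : f.natDegree ≤ z.norm.natDegree := by
  have hf0 : f ≠ 0 := by rintro rfl; simp at hf
  have h1 : (f * z.im * z.im).natDegree = f.natDegree + z.im.natDegree + z.im.natDegree := by
    rw [natDegree_mul (mul_ne_zero hf0 hz) hz, natDegree_mul hf0 hz]
  have h2 : (z.re * z.re).natDegree = z.re.natDegree + z.re.natDegree := by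
    by_cases h : z.re = 0
    · simp [h]
    · rw [natDegree_mul h h]
  have hn : z.norm = z.re * z.re - f * z.im * z.im := by simp [norm_def]
  obtain ⟨k, hk⟩ := hf
  rcases lt_trichotomy (z.re * z.re).natDegree (f * z.im * z.im).natDegree with h | h | h
  · rw [hn, natDegree_sub_eq_right_of_natDegree_lt h]
    omega
  · omega
  · rw [hn, natDegree_sub_eq_left_of_natDegree_lt h]
    omega

theorem norm_eq_zero_of_odd_natDegree (hf : Odd f.natDegree) {z : QuadraticAlgebra κ[X] f 0}
    (hz : z.norm = 0) : z = 0 := by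
  have him : z.im = 0 := by
    by_contra h
    have := natDegree_le_natDegree_norm hf h
    rw [hz, natDegree_zero] at this
    have := hf.pos
    omega
  ext1
  · simpa [norm_def, him] using hz
  · exact him

theorem isDomain_of_odd_natDegree (hf : Odd f.natDegree) :
    IsDomain (QuadraticAlgebra κ[X] f 0) :=
  have : NoZeroDivisors (QuadraticAlgebra κ[X] f 0) := ⟨fun {a b} h ↦ by
    have : a.norm * b.norm = 0 := by rw [← map_mul, h, norm_zero]
    exact (mul_eq_zero.mp this).imp (norm_eq_zero_of_odd_natDegree hf)
      (norm_eq_zero_of_odd_natDegree hf)⟩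
  NoZeroDivisors.to_isDomain _

theorem _root_.IsIntegrallyClosed.dvd_of_isIntegral {A K : Type*} [CommRing A] [IsDomain A]
    [IsIntegrallyClosed A] [Field K] [Algebra A K] [FaithfulSMul A K] {p d : A} (hd : d ≠ 0)
    (h : IsIntegral A (algebraMap A K p / algebraMap A K d)) : d ∣ p := by
  let := FractionRing.liftAlgebra A K
  have := FractionRing.isScalarTower_liftAlgebra A K
  have h' : IsIntegral A
      (algebraMap A (FractionRing A) p / algebraMap A (FractionRing A) d) := by
    rw [← isIntegral_algebraMap_iff (B := K) (algebraMap (FractionRing A) K).injective]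
    simpa [← IsScalarTower.algebraMap_apply] using h
  obtain ⟨y, hy⟩ := IsIntegrallyClosed.isIntegral_iff.mp h'
  refine ⟨y, IsFractionRing.injective A (FractionRing A) ?_⟩
  rw [eq_div_iff (by simpa using hd)] at hy
  rw [← hy, map_mul, mul_comm]

theorem _root_.dvd_of_sq_dvd_squarefree_mul_sq {A : Type*} [CommRing A] [IsDomain A]
    [UniqueFactorizationMonoid A] {f d i : A} (hf : Squarefree f) (hd : d ≠ 0)
    (h : d ^ 2 ∣ f * i ^ 2) : d ∣ i := by
  obtain ⟨d', i', c, hrel, rfl, rfl⟩ := UniqueFactorizationMonoid.exists_reduced_factors d hd i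
  have hc : c ≠ 0 := left_ne_zero_of_mul hd
  have h1 : d' ^ 2 ∣ f * i' ^ 2 := by
    rw [mul_pow, mul_pow, mul_left_comm] at h
    exact (mul_dvd_mul_iff_left (pow_ne_zero 2 hc)).mp h
  have h2 : d' ^ 2 ∣ f := hrel.pow.dvd_of_dvd_mul_right h1
  have h3 : IsUnit d' := hf d' (by rwa [← sq])
  exact mul_dvd_mul_left c h3.dvd

theorem isIntegrallyClosed_of_squarefree (hf : Odd f.natDegree) (hsq : Squarefree f)
    (h2 : (2 : κ) ≠ 0) : IsIntegrallyClosed (QuadraticAlgebra κ[X] f 0) := by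
  have := isDomain_of_odd_natDegree hf
  let K := FractionRing (QuadraticAlgebra κ[X] f 0)
  rw [isIntegrallyClosed_iff K]
  intro x hx
  obtain ⟨a, b, hb, rfl⟩ := IsFractionRing.div_surjective (A := QuadraticAlgebra κ[X] f 0) x
  have hb0 : b ≠ 0 := nonZeroDivisors.ne_zero hb
  have hd0 : b.norm ≠ 0 := fun h ↦ hb0 (norm_eq_zero_of_odd_natDegree hf h)
  set w := a * star b with hw
  set d := b.norm with hd
  have hdK : algebraMap κ[X] K d ≠ 0 := by
    rw [IsScalarTower.algebraMap_apply κ[X] (QuadraticAlgebra κ[X] f 0) K]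
    simpa [algebraMap_injective.eq_iff' (map_zero _)] using hd0
  have hdd : algebraMap κ[X] K d =
      algebraMap (QuadraticAlgebra κ[X] f 0) K b *
        algebraMap (QuadraticAlgebra κ[X] f 0) K (star b) := by
    rw [IsScalarTower.algebraMap_apply κ[X] (QuadraticAlgebra κ[X] f 0) K,
      algebraMap_norm_eq_mul_star, map_mul]
  have hbK : algebraMap (QuadraticAlgebra κ[X] f 0) K b ≠ 0 := by simpa using hb0
  have hx' : algebraMap (QuadraticAlgebra κ[X] f 0) K a /
      algebraMap (QuadraticAlgebra κ[X] f 0) K b =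
      algebraMap (QuadraticAlgebra κ[X] f 0) K w / algebraMap κ[X] K d := by
    rw [div_eq_div_iff hbK hdK, hdd, hw, map_mul]; ring
  rw [hx'] at hx ⊢
  have : FaithfulSMul κ[X] K := by
    rw [faithfulSMul_iff_algebraMap_injective,
      IsScalarTower.algebraMap_eq κ[X] (QuadraticAlgebra κ[X] f 0) K]
    exact (IsFractionRing.injective (QuadraticAlgebra κ[X] f 0) K).comp algebraMap_injective
  have : Algebra.IsIntegral κ[X] (QuadraticAlgebra κ[X] f 0) := inferInstance
  set σ : K ≃+* K := IsFractionRing.ringEquivOfRingEquiv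
    (starRingAut : QuadraticAlgebra κ[X] f 0 ≃+* QuadraticAlgebra κ[X] f 0) with hσ
  have hσR (r : QuadraticAlgebra κ[X] f 0) : σ (algebraMap (QuadraticAlgebra κ[X] f 0) K r) =
      algebraMap (QuadraticAlgebra κ[X] f 0) K (star r) := by
    simp [hσ]
  have hσX (r : κ[X]) : σ (algebraMap κ[X] K r) = algebraMap κ[X] K r := by
    rw [IsScalarTower.algebraMap_apply κ[X] (QuadraticAlgebra κ[X] f 0) K, hσR]
    congr 1
    exact QuadraticAlgebra.ext (by simp) (by simp)
  have hx2 : IsIntegral (QuadraticAlgebra κ[X] f 0)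
      (algebraMap (QuadraticAlgebra κ[X] f 0) K (star w) / algebraMap κ[X] K d) := by
    have := IsIntegral.map_of_comp_eq
      (starRingAut : QuadraticAlgebra κ[X] f 0 ≃+* QuadraticAlgebra κ[X] f 0).toRingHom σ.toRingHom
      (by ext r; simp [hσR]) hx
    simpa [hσR, hσX] using this
  have hx1 := isIntegral_trans (R := κ[X]) _ hx
  have hx2 := isIntegral_trans (R := κ[X]) _ hx2
  have htr : d ∣ w.re := by
    have h := hx1.add hx2
    rw [← add_div, ← map_add, ← algebraMap_trace_eq_add_star,
      ← IsScalarTower.algebraMap_apply] at h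
    have h3 := IsIntegrallyClosed.dvd_of_isIntegral hd0 h
    have h4 : trace w = C (2 : κ) * w.re := by rw [trace_def, map_ofNat]; simp
    rw [h4] at h3
    exact (IsUnit.dvd_mul_left (isUnit_C.mpr h2.isUnit)).mp h3
  have hnm : d ^ 2 ∣ w.norm := by
    have h := hx1.mul hx2
    rw [div_mul_div_comm, ← map_mul, ← algebraMap_norm_eq_mul_star,
      ← IsScalarTower.algebraMap_apply, ← sq, ← map_pow] at h
    exact IsIntegrallyClosed.dvd_of_isIntegral (pow_ne_zero 2 hd0) h
  have him : d ∣ w.im := by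
    have h : d ^ 2 ∣ f * w.im ^ 2 := by
      have h5 : f * w.im ^ 2 = w.re ^ 2 - w.norm := by simp [norm_def]; ring
      rw [h5]
      exact dvd_sub (pow_dvd_pow_of_dvd htr 2) hnm
    exact dvd_of_sq_dvd_squarefree_mul_sq hsq hd0 h
  obtain ⟨p, hp⟩ := htr
  obtain ⟨i, hi⟩ := him
  refine ⟨⟨p, i⟩, ?_⟩
  rw [eq_div_iff hdK, IsScalarTower.algebraMap_apply κ[X] (QuadraticAlgebra κ[X] f 0) K, ← map_mul]
  congr 1
  exact QuadraticAlgebra.ext (by simp [hp, mul_comm]) (by simp [hi, mul_comm])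

end IntegrallyClosed
end QuadraticAlgebra

namespace QuadraticAlgebra

section FunctionField

variable {κ : Type*} [Field κ] {f : κ[X]} {L : Type*} [Field L] [Algebra κ[X] L]
  [Algebra (RatFunc κ) L] [IsScalarTower κ[X] (RatFunc κ) L] {s : L}

theorem exists_ringEquiv_integralClosure (hf : Odd f.natDegree) (hsq : Squarefree f)
    (h2 : (2 : κ) ≠ 0) (hs : s ^ 2 = algebraMap κ[X] L f)
    (hL : Algebra.adjoin (RatFunc κ) {s} = ⊤) :
    Nonempty (QuadraticAlgebra κ[X] f 0 ≃+* integralClosure κ[X] L) := by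
  have := isDomain_of_odd_natDegree hf
  have := isIntegrallyClosed_of_squarefree hf hsq h2
  have hinjX : Function.Injective (algebraMap κ[X] L) := by
    rw [IsScalarTower.algebraMap_eq κ[X] (RatFunc κ) L]
    exact (algebraMap (RatFunc κ) L).injective.comp (IsFractionRing.injective κ[X] (RatFunc κ))
  let φ : QuadraticAlgebra κ[X] f 0 →ₐ[κ[X]] L :=
    lift ⟨s, by simp [← sq, hs, Algebra.algebraMap_eq_smul_one]⟩
  have hφω : φ ω = s := by simp [φ]
  have hφ : Function.Injective φ := by
    rw [injective_iff_map_eq_zero]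
    intro z hz
    apply norm_eq_zero_of_odd_natDegree hf
    apply hinjX
    rw [← φ.commutes, algebraMap_norm_eq_mul_star, map_mul, hz, zero_mul, map_zero]
  let : Algebra (QuadraticAlgebra κ[X] f 0) L := φ.toRingHom.toAlgebra
  have halg (z : QuadraticAlgebra κ[X] f 0) :
    algebraMap (QuadraticAlgebra κ[X] f 0) L z = φ z := rfl
  have : IsScalarTower κ[X] (QuadraticAlgebra κ[X] f 0) L :=
    IsScalarTower.of_algebraMap_eq fun x ↦ (φ.commutes x).symm
  have : FaithfulSMul (QuadraticAlgebra κ[X] f 0) L :=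
    (faithfulSMul_iff_algebraMap_injective _ _).mpr hφ
  have hfrac : ∀ z : L, ∃ x : QuadraticAlgebra κ[X] f 0, ∃ y : κ[X], y ≠ 0 ∧
      z * algebraMap κ[X] L y = φ x := by
    intro z
    have hz : z ∈ Algebra.adjoin (RatFunc κ) {s} := hL ▸ Algebra.mem_top
    induction hz using Algebra.adjoin_induction with
    | mem x hx =>
      rw [Set.mem_singleton_iff.mp hx]
      exact ⟨ω, 1, one_ne_zero, by simp [hφω]⟩
    | algebraMap r =>
      refine ⟨algebraMap _ _ r.num, r.denom, r.denom_ne_zero, ?_⟩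
      rw [φ.commutes, IsScalarTower.algebraMap_apply κ[X] (RatFunc κ) L,
        IsScalarTower.algebraMap_apply κ[X] (RatFunc κ) L, ← map_mul]
      congr 1
      nth_rw 1 [← RatFunc.num_div_denom r]
      exact div_mul_cancel₀ _ (by simpa using r.denom_ne_zero)
    | add x y _ _ hx hy =>
      obtain ⟨a, b, hb, h⟩ := hx
      obtain ⟨c, d, hd, h'⟩ := hy
      refine ⟨a * algebraMap _ _ d + c * algebraMap _ _ b, b * d, mul_ne_zero hb hd, ?_⟩
      simp only [map_add, map_mul, φ.commutes, ← h, ← h']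
      ring
    | mul x y _ _ hx hy =>
      obtain ⟨a, b, hb, h⟩ := hx
      obtain ⟨c, d, hd, h'⟩ := hy
      refine ⟨a * c, b * d, mul_ne_zero hb hd, ?_⟩
      simp only [map_mul, ← h, ← h']
      ring
  have : IsFractionRing (QuadraticAlgebra κ[X] f 0) L := IsFractionRing.of_field _ _ fun z ↦ by
    obtain ⟨x, y, hy, h⟩ := hfrac z
    refine ⟨x, algebraMap _ _ y, ?_⟩
    rw [halg, halg, φ.commutes, eq_div_iff, h]
    exact fun h0 ↦ hy (hinjX (by rw [h0, map_zero]))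
  have hmem_int (z : QuadraticAlgebra κ[X] f 0) : φ z ∈ integralClosure κ[X] L :=
    (Algebra.IsIntegral.isIntegral (R := κ[X]) z).map φ
  refine ⟨RingEquiv.ofBijective (φ.codRestrict _ hmem_int) ⟨?_, ?_⟩⟩
  · exact fun a b h ↦ hφ (congrArg Subtype.val h)
  · intro z
    obtain ⟨y, hy⟩ := (IsIntegrallyClosed.isIntegral_iff (R := QuadraticAlgebra κ[X] f 0)).mp
      (z.2.tower_top (A := QuadraticAlgebra κ[X] f 0))
    exact ⟨y, Subtype.ext hy⟩

theorem isDedekindDomain_of_squarefree (hf : Odd f.natDegree) (hsq : Squarefree f)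
    (h2 : (2 : κ) ≠ 0) {O : Type*} [CommRing O] [IsDomain O] [Ring.DimensionLEOne O]
    (e : QuadraticAlgebra κ[X] f 0 ≃+* O) : IsDedekindDomain O := by
  have := isDomain_of_odd_natDegree hf
  have := isIntegrallyClosed_of_squarefree hf hsq h2
  have : IsNoetherianRing (QuadraticAlgebra κ[X] f 0) :=
    IsNoetherianRing.of_finite κ[X] _
  have := isNoetherianRing_of_ringEquiv _ e
  have := IsIntegrallyClosed.of_equiv e
  exact {}

end FunctionField
end QuadraticAlgebra

section TwistedTrace

variable (Fq : Type*) [Fintype Fq] {A B : Type*} [CommRing A] [CommRing B]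

/-- The alternating analogue `∑ i < n, (-1) ^ (i + 1) * x ^ (q ^ i)` of the trace. -/
def twistedTrace (n : ℕ) (x : A) : A :=
  ∑ i ∈ Finset.range n, (-1) ^ (i + 1) * x ^ (Fintype.card Fq ^ i)

theorem map_twistedTrace (g : A →+* B) (n : ℕ) (x : A) :
    g (twistedTrace Fq n x) = twistedTrace Fq n (g x) := by
  simp [twistedTrace]

variable [Field Fq] [Algebra Fq A]

theorem add_pow_card_pow_of_algebra (i : ℕ) (x y : A) :
    (x + y) ^ (Fintype.card Fq ^ i) = x ^ (Fintype.card Fq ^ i) + y ^ (Fintype.card Fq ^ i) := by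
  have h (z : A) : (FiniteField.frobeniusAlgHom Fq A ^ i) z = z ^ (Fintype.card Fq ^ i) := by
    simp [AlgHom.coe_pow, FiniteField.coe_frobeniusAlgHom, pow_iterate]
  simp only [← h, map_add]

theorem add_pow_card_of_algebra (x y : A) :
    (x + y) ^ Fintype.card Fq = x ^ Fintype.card Fq + y ^ Fintype.card Fq := by
  simpa using add_pow_card_pow_of_algebra Fq 1 x y

theorem sum_pow_card_of_algebra {ι : Type*} (s : Finset ι) (x : ι → A) :
    (∑ i ∈ s, x i) ^ Fintype.card Fq = ∑ i ∈ s, x i ^ Fintype.card Fq :=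
  map_sum (FiniteField.frobeniusAlgHom Fq A) x s

theorem algebraMap_pow_card (a : Fq) :
    algebraMap Fq A a ^ Fintype.card Fq = algebraMap Fq A a := by
  rw [← map_pow, FiniteField.pow_card]

theorem twistedTrace_add (n : ℕ) (x y : A) :
    twistedTrace Fq n (x + y) = twistedTrace Fq n x + twistedTrace Fq n y := by
  simp [twistedTrace, add_pow_card_pow_of_algebra, mul_add, Finset.sum_add_distrib]

theorem twistedTrace_algebraMap_mul (n : ℕ) (a : Fq) (x : A) :
    twistedTrace Fq n (algebraMap Fq A a * x) = algebraMap Fq A a * twistedTrace Fq n x := by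
  simp only [twistedTrace, mul_pow, Finset.mul_sum, ← map_pow, FiniteField.pow_card_pow]
  exact Finset.sum_congr rfl fun i _ ↦ by ring

theorem twistedTrace_pow_card_add {n : ℕ} (hq : Odd (Fintype.card Fq)) (hn : Even n) (x : A) :
    twistedTrace Fq n x ^ Fintype.card Fq + twistedTrace Fq n x =
      x ^ (Fintype.card Fq ^ n) - x := by
  rw [twistedTrace, sum_pow_card_of_algebra, ← Finset.sum_add_distrib]
  have h (i : ℕ) : ((-1) ^ (i + 1) * x ^ (Fintype.card Fq ^ i)) ^ Fintype.card Fq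
      + (-1) ^ (i + 1) * x ^ (Fintype.card Fq ^ i)
      = (-1) ^ (i + 1) * x ^ (Fintype.card Fq ^ (i + 1))
        - (-1) ^ i * x ^ (Fintype.card Fq ^ i) := by
    rw [mul_pow, ← pow_mul, ← pow_mul, mul_comm (i + 1), pow_mul, hq.neg_one_pow, pow_succ _ i]
    ring
  simp only [h]
  rw [Finset.sum_range_sub (fun i ↦ (-1) ^ i * x ^ (Fintype.card Fq ^ i)), hn.neg_one_pow]
  simp

theorem two_ne_zero_of_odd_card (hq : Odd (Fintype.card Fq)) : (2 : Fq) ≠ 0 := by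
  intro h
  have : ringChar Fq = 2 :=
    CharP.ringChar_of_prime_eq_zero Nat.prime_two (by exact_mod_cast h)
  exact Nat.not_even_iff_odd.mpr hq
    (Nat.even_iff.mpr (FiniteField.even_card_of_char_two this))

theorem two_mul_algebraMap_half (hq : Odd (Fintype.card Fq)) :
    2 * algebraMap Fq A (2⁻¹) = 1 := by
  rw [← map_ofNat (algebraMap Fq A) 2, ← map_mul, mul_inv_cancel₀ (two_ne_zero_of_odd_card Fq hq),
    map_one]

theorem half_pow_card_add_one (hq : Odd (Fintype.card Fq)) (w : A) :
    (w + algebraMap Fq A 2⁻¹) ^ (Fintype.card Fq + 1) -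
      (w - algebraMap Fq A 2⁻¹) ^ (Fintype.card Fq + 1) = w ^ Fintype.card Fq + w := by
  have h2 := two_mul_algebraMap_half Fq (A := A) hq
  rw [sub_eq_add_neg w, pow_succ, pow_succ, add_pow_card_of_algebra, add_pow_card_of_algebra,
    hq.neg_pow, algebraMap_pow_card]
  linear_combination (w ^ Fintype.card Fq + w) * h2

theorem prod_add_algebraMap_mul {E : Type*} [Field E] [Algebra Fq E] (x : E) {u : E}
    (hu : u ≠ 0) (hu' : u ^ Fintype.card Fq = -u) :
    ∏ a : Fq, (x + algebraMap Fq E a * u) = x ^ Fintype.card Fq + x := by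
  have h1 (y : E) : ∏ a : Fq, (y + algebraMap Fq E a) = y ^ Fintype.card Fq - y := by
    have h : ∏ a : Fq, (X - C a) = (X ^ Fintype.card Fq - X : Fq[X]) := by
      have hm : (X ^ Fintype.card Fq - X : Fq[X]).Monic :=
        monic_X_pow_sub (by simpa using Fintype.one_lt_card)
      have hr := FiniteField.roots_X_pow_card_sub_X Fq
      have := prod_multiset_X_sub_C_of_monic_of_roots_card_eq hm
        (by rw [hr, FiniteField.X_pow_card_sub_X_natDegree_eq _ Fintype.one_lt_card]; rfl)
      rw [hr] at this
      exact this
    have h' := congrArg (aeval y) h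
    simp only [map_prod, map_sub, aeval_X, aeval_C, map_pow] at h'
    rw [← h']
    exact Fintype.prod_equiv (Equiv.neg Fq) _ _ fun a ↦ by simp
  have h2 (a : Fq) : x + algebraMap Fq E a * u = u * (x / u + algebraMap Fq E a) := by
    field_simp
  simp only [h2]
  rw [Finset.prod_mul_distrib, h1]
  simp only [Finset.prod_const, Finset.card_univ, div_pow, hu']
  field_simp
  ring

theorem prod_pow_half_sub {E : Type*} [Field E] [IsAlgClosed E] [Algebra Fq E]
    (hq : Odd (Fintype.card Fq)) {w v u : E} (hv : v ^ 2 = w ^ Fintype.card Fq + w)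
    (hu : u ≠ 0) (hu' : u ^ Fintype.card Fq = -u) :
    ∏ a : Fq, ((w + algebraMap Fq E a * u + algebraMap Fq E 2⁻¹) ^ ((Fintype.card Fq + 1) / 2) - v)
      = (1 - v) ^ (Fintype.card Fq + 1) := by
  set h := (Fintype.card Fq + 1) / 2 with hh
  have hh2 : h * 2 = Fintype.card Fq + 1 := by obtain ⟨k, hk⟩ := hq; omega
  set P : E[X] := X ^ h - C v with hP
  have hm : P.Monic := monic_X_pow_sub_C v (by omega)
  have hprod (x : E) : x ^ h - v = (P.roots.map fun z ↦ x - z).prod := by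
    have h1 := (IsAlgClosed.splits P).eq_prod_roots
    rw [hm.leadingCoeff, C_1, one_mul] at h1
    have h2 := congrArg (eval x) h1
    simpa [hP, eval_multiset_prod, Multiset.map_map] using h2
  have hc := two_mul_algebraMap_half Fq (A := E) hq
  have hroot : ∀ z ∈ P.roots, ∏ a : Fq, (w + algebraMap Fq E a * u + algebraMap Fq E 2⁻¹ - z)
      = (1 - z) ^ (Fintype.card Fq + 1) := by
    intro z hz
    have hz' : z ^ h = v := by
      have := isRoot_of_mem_roots hz
      simpa [hP, sub_eq_zero] using this
    have hz2 : z ^ (Fintype.card Fq + 1) = w ^ Fintype.card Fq + w := by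
      rw [← hv, ← hz', ← pow_mul, hh2]
    have e (a : Fq) : w + algebraMap Fq E a * u + algebraMap Fq E 2⁻¹ - z
        = (w + (algebraMap Fq E 2⁻¹ - z)) + algebraMap Fq E a * u := by ring
    simp only [e]
    rw [prod_add_algebraMap_mul Fq _ hu hu', pow_succ (1 - z), sub_eq_add_neg, sub_eq_add_neg,
      add_pow_card_of_algebra, add_pow_card_of_algebra, add_pow_card_of_algebra, hq.neg_pow,
      algebraMap_pow_card, one_pow]
    rw [pow_succ] at hz2
    linear_combination hc - hz2
  simp only [hprod]
  rw [← Multiset.prod_map_prod, Multiset.map_congr rfl hroot, Multiset.prod_map_pow,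
    ← hprod, one_pow]

end TwistedTrace

namespace QuadraticAlgebra

/-- The ring homomorphism of quadratic algebras induced by a ring homomorphism of base rings. -/
@[simps]
def mapRingHom {R R' : Type*} [CommRing R] [CommRing R'] {a : R} {a' : R'} (g : R →+* R')
    (h : g a = a') : QuadraticAlgebra R a 0 →+* QuadraticAlgebra R' a' 0 where
  toFun z := ⟨g z.re, g z.im⟩
  map_one' := by ext <;> simp
  map_zero' := by ext <;> simp
  map_add' x y := by ext <;> simp
  map_mul' x y := by ext <;> simp [h]

theorem mapRingHom_injective {R R' : Type*} [CommRing R] [CommRing R'] {a : R} {a' : R'}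
    {g : R →+* R'} (h : g a = a') (hg : Function.Injective g) :
    Function.Injective (mapRingHom g h) := fun _ _ hxy ↦
  QuadraticAlgebra.ext (hg (congrArg re hxy)) (hg (congrArg im hxy))

end QuadraticAlgebra

variable (Fq : Type*) [Fintype Fq] (κ : Type*) [Field κ] (n : ℕ) in
/-- The coordinate ring of the affine curve `s ^ 2 = t ^ (q ^ n) - t` over `κ`. -/
abbrev HyperellipticRing : Type _ :=
  QuadraticAlgebra κ[X] (X ^ (Fintype.card Fq ^ n) - X) 0

namespace HyperellipticRing

variable (Fq : Type*) [Fintype Fq] {κ : Type*} [Field κ] {n : ℕ}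

theorem odd_natDegree_X_pow_card_pow_sub_X [Nontrivial Fq] (hq : Odd (Fintype.card Fq))
    (hn : 0 < n) : Odd (X ^ (Fintype.card Fq ^ n) - X : κ[X]).natDegree := by
  rw [FiniteField.X_pow_card_pow_sub_X_natDegree_eq _ hn.ne' Fintype.one_lt_card]
  exact hq.pow

/-- The additive polynomial `W` with `W ^ q + W = c ^ 2 * (X ^ (q ^ n) - X)`. -/
noncomputable def additivePoly (n : ℕ) (c : κ) : κ[X] :=
  twistedTrace Fq n (C (c ^ 2) * X)

theorem additivePoly_neg (c : κ) : additivePoly Fq n (-c) = additivePoly Fq n c := by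
  simp [additivePoly]

theorem eval_additivePoly (c T : κ) :
    (additivePoly Fq n c).eval T = twistedTrace Fq n (c ^ 2 * T) := by
  rw [additivePoly, ← coe_evalRingHom, map_twistedTrace]
  simp

variable [Field Fq] [Algebra Fq κ]

theorem squarefree_X_pow_card_pow_sub_X (hn : 0 < n) :
    Squarefree (X ^ (Fintype.card Fq ^ n) - X : κ[X]) := by
  apply Separable.squarefree
  have h0 : ((Fintype.card Fq ^ n : ℕ) : κ) = 0 := by
    rw [Nat.cast_pow, ← map_natCast (algebraMap Fq κ), Nat.cast_card_eq_zero, map_zero,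
      zero_pow hn.ne']
  refine ⟨0, -1, ?_⟩
  simp only [derivative_sub, derivative_X_pow, h0, derivative_X]
  simp

theorem eval_additivePoly_algebraMap_mul (c T : κ) (a : Fq) :
    (additivePoly Fq n c).eval (algebraMap Fq κ a * T) =
      algebraMap Fq κ a * (additivePoly Fq n c).eval T := by
  rw [eval_additivePoly, eval_additivePoly, ← twistedTrace_algebraMap_mul]
  ring_nf

theorem additivePoly_comp (c T : κ) : (additivePoly Fq n c).comp (X + C T) =
    additivePoly Fq n c + C ((additivePoly Fq n c).eval T) := by
  rw [eval_additivePoly, map_twistedTrace, additivePoly, ← coe_compRingHom_apply,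
    map_twistedTrace, ← twistedTrace_add]
  simp [mul_add]

theorem additivePoly_pow_card_add (hq : Odd (Fintype.card Fq)) (hn : Even n) {c : κ}
    (hc : c ^ (Fintype.card Fq ^ n) = c) :
    additivePoly Fq n c ^ Fintype.card Fq + additivePoly Fq n c =
      C (c ^ 2) * (X ^ (Fintype.card Fq ^ n) - X) := by
  rw [additivePoly, twistedTrace_pow_card_add Fq hq hn, mul_pow, ← C_pow, ← pow_mul,
    mul_comm 2, pow_mul, hc]
  ring

theorem eval_additivePoly_pow_card_add (hq : Odd (Fintype.card Fq)) (hn : Even n) {c : κ}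
    (hc : c ^ (Fintype.card Fq ^ n) = c) (T : κ) :
    (additivePoly Fq n c).eval T ^ Fintype.card Fq + (additivePoly Fq n c).eval T =
      c ^ 2 * (T ^ (Fintype.card Fq ^ n) - T) := by
  simpa using congrArg (eval T) (additivePoly_pow_card_add Fq hq hn hc)

/-- The function `(W + 1 / 2) ^ ((q + 1) / 2) - c * s`, whose norm is `(W - 1 / 2) ^ (q + 1)`. -/
@[simps]
noncomputable def powNormElt (n : ℕ) (c : κ) : HyperellipticRing Fq κ n :=
  ⟨(additivePoly Fq n c + algebraMap Fq κ[X] 2⁻¹) ^ ((Fintype.card Fq + 1) / 2), -C c⟩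

theorem star_powNormElt (c : κ) : star (powNormElt Fq n c) = powNormElt Fq n (-c) := by
  ext1 <;> simp [additivePoly_neg]

theorem norm_powNormElt (hq : Odd (Fintype.card Fq)) (hn : Even n) {c : κ}
    (hc : c ^ (Fintype.card Fq ^ n) = c) :
    (powNormElt Fq n c).norm =
      (additivePoly Fq n c - algebraMap Fq κ[X] 2⁻¹) ^ (Fintype.card Fq + 1) := by
  have h1 := half_pow_card_add_one Fq hq (additivePoly Fq n c)
  rw [additivePoly_pow_card_add Fq hq hn hc] at h1
  have h2 : (Fintype.card Fq + 1) / 2 + (Fintype.card Fq + 1) / 2 = Fintype.card Fq + 1 := by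
    obtain ⟨k, hk⟩ := hq; omega
  simp only [QuadraticAlgebra.norm_def, re_powNormElt, im_powNormElt, ← pow_add, h2]
  rw [C_pow] at h1
  linear_combination h1

/-- Translation by a root `T` of `X ^ (q ^ n) - X`. -/
noncomputable def translate {T : κ} (hT : T ^ (Fintype.card Fq ^ n) = T) :
    HyperellipticRing Fq κ n →+* HyperellipticRing Fq κ n :=
  QuadraticAlgebra.mapRingHom (compRingHom (X + C T)) (by
    simp [add_pow_card_pow_of_algebra, ← C_pow, hT])

theorem translate_injective {T : κ} (hT : T ^ (Fintype.card Fq ^ n) = T) :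
    Function.Injective (translate Fq hT) :=
  QuadraticAlgebra.mapRingHom_injective _ ((injective_iff_map_eq_zero _).mpr fun _ hp ↦
    comp_X_add_C_eq_zero_iff.mp hp)

theorem algebraMap_mul_pow_card_pow {T : κ} (hT : T ^ (Fintype.card Fq ^ n) = T) (a : Fq) :
    (algebraMap Fq κ a * T) ^ (Fintype.card Fq ^ n) = algebraMap Fq κ a * T := by
  rw [mul_pow, hT, ← map_pow, FiniteField.pow_card_pow]

/-- The product of the translates by the `𝔽_q`-multiples of `T`. -/
noncomputable def translateProd {T : κ} (hT : T ^ (Fintype.card Fq ^ n) = T) :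
    HyperellipticRing Fq κ n →* HyperellipticRing Fq κ n :=
  ∏ a : Fq, (translate Fq (algebraMap_mul_pow_card_pow Fq hT a)).toMonoidHom

theorem translateProd_apply {T : κ} (hT : T ^ (Fintype.card Fq ^ n) = T)
    (z : HyperellipticRing Fq κ n) : translateProd Fq hT z =
      ∏ a : Fq, translate Fq (algebraMap_mul_pow_card_pow Fq hT a) z := by
  simp [translateProd, MonoidHom.finsetProd_apply]

theorem translateProd_ne_zero [IsDomain (HyperellipticRing Fq κ n)] {T : κ}
    (hT : T ^ (Fintype.card Fq ^ n) = T) {z : HyperellipticRing Fq κ n} (hz : z ≠ 0) :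
    translateProd Fq hT z ≠ 0 := by
  rw [translateProd_apply]
  exact Finset.prod_ne_zero_iff.mpr fun a _ ↦
    (map_ne_zero_iff _ (translate_injective Fq _)).mpr hz

theorem translate_powNormElt {T : κ} (hT : T ^ (Fintype.card Fq ^ n) = T) (c : κ) :
    translate Fq hT (powNormElt Fq n c) =
      ⟨(additivePoly Fq n c + C ((additivePoly Fq n c).eval T) +
        algebraMap Fq κ[X] 2⁻¹) ^ ((Fintype.card Fq + 1) / 2), -C c⟩ := by
  ext1
  · simp [translate, additivePoly_comp, IsScalarTower.algebraMap_apply Fq κ κ[X]]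
  · simp [translate]

theorem translateProd_powNormElt_of_eval_eq_zero {T : κ} (hT : T ^ (Fintype.card Fq ^ n) = T)
    {c : κ} (h : (additivePoly Fq n c).eval T = 0) :
    translateProd Fq hT (powNormElt Fq n c) = powNormElt Fq n c ^ Fintype.card Fq := by
  have h1 (a : Fq) : translate Fq (algebraMap_mul_pow_card_pow Fq hT a) (powNormElt Fq n c) =
      powNormElt Fq n c := by
    rw [translate_powNormElt]
    ext1 <;> simp [eval_additivePoly_algebraMap_mul, h]
  simp [translateProd_apply, h1]

theorem translateProd_powNormElt_of_eval_ne_zero [IsDomain (HyperellipticRing Fq κ n)]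
    (hq : Odd (Fintype.card Fq)) (hn : Even n) {T : κ} (hT : T ^ (Fintype.card Fq ^ n) = T)
    {c : κ} (hc : c ^ (Fintype.card Fq ^ n) = c) (h : (additivePoly Fq n c).eval T ≠ 0) :
    translateProd Fq hT (powNormElt Fq n c) =
      (⟨1, -C c⟩ : HyperellipticRing Fq κ n) ^ (Fintype.card Fq + 1) := by
  let E := AlgebraicClosure (FractionRing (HyperellipticRing Fq κ n))
  have hinj : Function.Injective (algebraMap (HyperellipticRing Fq κ n) E) := by
    rw [IsScalarTower.algebraMap_eq _ (FractionRing (HyperellipticRing Fq κ n)) E]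
    exact (algebraMap (FractionRing (HyperellipticRing Fq κ n)) E).injective.comp
      (IsFractionRing.injective _ _)
  set h' := (Fintype.card Fq + 1) / 2 with hh'
  set u := (additivePoly Fq n c).eval T with hu
  have hu' : u ^ Fintype.card Fq = -u := by
    have := eval_additivePoly_pow_card_add Fq hq hn hc T
    rw [hT, sub_self, mul_zero] at this
    exact eq_neg_of_add_eq_zero_left this
  have key (a : Fq) : (⟨(additivePoly Fq n c + C (algebraMap Fq κ a * u) +
        algebraMap Fq κ[X] 2⁻¹) ^ h', -C c⟩ : HyperellipticRing Fq κ n) =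
      (algebraMap κ[X] _ (additivePoly Fq n c) + algebraMap Fq _ a * algebraMap κ _ u +
        algebraMap Fq _ 2⁻¹) ^ h' - ⟨0, C c⟩ := by
    rw [IsScalarTower.algebraMap_apply Fq κ[X] (HyperellipticRing Fq κ n),
      IsScalarTower.algebraMap_apply Fq κ[X] (HyperellipticRing Fq κ n),
      IsScalarTower.algebraMap_apply κ κ[X] (HyperellipticRing Fq κ n), ← map_mul, ← map_add,
      ← map_add, ← map_pow]
    ext1
    · simp only [QuadraticAlgebra.re_sub, QuadraticAlgebra.algebraMap_re]
      simp [-map_inv₀, IsScalarTower.algebraMap_apply Fq κ κ[X]]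
    · simp only [QuadraticAlgebra.im_sub, QuadraticAlgebra.algebraMap_im, zero_sub]
  have hv : (⟨0, C c⟩ : HyperellipticRing Fq κ n) ^ 2 =
      algebraMap κ[X] _ (additivePoly Fq n c) ^ Fintype.card Fq +
        algebraMap κ[X] _ (additivePoly Fq n c) := by
    rw [← map_pow, ← map_add, additivePoly_pow_card_add Fq hq hn hc, sq]
    ext1
    · simp only [QuadraticAlgebra.re_mul, QuadraticAlgebra.algebraMap_re, Polynomial.C_pow]
      ring
    · simp only [QuadraticAlgebra.im_mul, QuadraticAlgebra.algebraMap_im]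
      ring
  have h1 : (⟨1, -C c⟩ : HyperellipticRing Fq κ n) = 1 - ⟨0, C c⟩ := by
    ext1
    · exact (sub_zero 1).symm
    · exact (zero_sub _).symm
  have hv' := congrArg (algebraMap _ E) hv
  have h0 : algebraMap _ E (algebraMap κ (HyperellipticRing Fq κ n) u) ≠ 0 := by
    rw [Ne, hinj.eq_iff' (map_zero _)]
    simpa using h
  have hu'' := congrArg (algebraMap _ E) (congrArg (algebraMap κ (HyperellipticRing Fq κ n)) hu')
  simp only [map_pow, map_add, map_neg] at hv' hu''
  have hE := prod_pow_half_sub Fq hq hv' h0 hu''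
  apply hinj
  simp only [translateProd_apply, map_prod, translate_powNormElt,
    eval_additivePoly_algebraMap_mul, ← hu, ← hh', h1, key]
  simp only [map_pow, map_sub, map_one, map_add, map_mul]
  simpa only [IsScalarTower.algebraMap_apply Fq (HyperellipticRing Fq κ n) E] using hE

end HyperellipticRing

namespace HyperellipticRing

variable (Fq : Type*) [Fintype Fq] {κ : Type*} [Field κ] {n : ℕ}

theorem additivePoly_eq_sum (c : κ) : additivePoly Fq n c = ∑ i ∈ Finset.range n,
    C ((-1) ^ (i + 1) * (c ^ 2) ^ (Fintype.card Fq ^ i)) * X ^ (Fintype.card Fq ^ i) := by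
  simp [additivePoly, twistedTrace, mul_pow, mul_assoc]

variable [Field Fq]

theorem coeff_additivePoly_card_pow (c : κ) {j : ℕ} (hj : j < n) :
    (additivePoly Fq n c).coeff (Fintype.card Fq ^ j) =
      (-1) ^ (j + 1) * (c ^ 2) ^ (Fintype.card Fq ^ j) := by
  rw [additivePoly_eq_sum, finsetSum_coeff, Finset.sum_eq_single j]
  · rw [coeff_C_mul_X_pow, if_pos rfl]
  · intro i _ hij
    rw [coeff_C_mul_X_pow, if_neg]
    exact fun h ↦ hij (Nat.pow_right_injective Fintype.one_lt_card h).symm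
  · exact fun h ↦ absurd (Finset.mem_range.mpr hj) h

theorem natDegree_additivePoly_le (c : κ) :
    (additivePoly Fq n c).natDegree ≤ Fintype.card Fq ^ (n - 1) := by
  rw [additivePoly_eq_sum]
  refine natDegree_sum_le_of_forall_le _ _ fun i hi ↦ (natDegree_C_mul_X_pow_le _ _).trans ?_
  have := Finset.mem_range.mp hi
  exact Nat.pow_le_pow_right Fintype.card_pos (by omega)

theorem natDegree_additivePoly (hn : 0 < n) {c : κ} (hc : c ≠ 0) :
    (additivePoly Fq n c).natDegree = Fintype.card Fq ^ (n - 1) := by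
  refine natDegree_eq_of_le_of_coeff_ne_zero (natDegree_additivePoly_le Fq c) ?_
  rw [coeff_additivePoly_card_pow Fq c (by omega)]
  simp [hc]

variable [Algebra Fq κ]

theorem im_eq_zero_of_pow_eq_powNormElt (hq : Odd (Fintype.card Fq)) (hn : Even n) (hn0 : 0 < n)
    {c : κ} (hc : c ^ (Fintype.card Fq ^ n) = c) {b : HyperellipticRing Fq κ n} {r : ℕ}
    (hr : 2 ≤ r) (h : b ^ r = powNormElt Fq n c) : b.im = 0 := by
  by_contra him
  have h1 := QuadraticAlgebra.natDegree_le_natDegree_norm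
    (odd_natDegree_X_pow_card_pow_sub_X Fq hq hn0) him
  rw [FiniteField.X_pow_card_pow_sub_X_natDegree_eq _ hn0.ne' Fintype.one_lt_card] at h1
  have h2 := congrArg (fun z ↦ (QuadraticAlgebra.norm z).natDegree) h
  simp only [map_pow, norm_powNormElt Fq hq hn hc, natDegree_pow] at h2
  have h3 : (additivePoly Fq n c - algebraMap Fq κ[X] 2⁻¹).natDegree ≤
      Fintype.card Fq ^ (n - 1) := by
    rw [IsScalarTower.algebraMap_apply Fq κ κ[X], algebraMap_eq, natDegree_sub_C]
    exact natDegree_additivePoly_le Fq c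
  have h4 : Fintype.card Fq ^ n = Fintype.card Fq ^ (n - 1) * Fintype.card Fq := by
    rw [← pow_succ, Nat.sub_add_cancel hn0]
  have h5 : 1 < Fintype.card Fq := Fintype.one_lt_card
  have h6 : 0 < Fintype.card Fq ^ (n - 1) := by positivity
  nlinarith

theorem dvd_of_powNormElt_pow_mul_pow_eq [IsAlgClosed κ] (hq : Odd (Fintype.card Fq))
    (hn : Even n) (hn0 : 0 < n) {c : κ} (hc : c ^ (Fintype.card Fq ^ n) = c) (hc0 : c ≠ 0)
    {m : ℕ} (hm : 0 < m) {E : ℕ} {D B : HyperellipticRing Fq κ n} (hD : D ≠ 0)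
    (h : powNormElt Fq n c ^ E * D ^ m = B ^ m) : m ∣ E := by
  have hf := odd_natDegree_X_pow_card_pow_sub_X Fq (κ := κ) hq hn0
  have h2 : (2 : κ) ≠ 0 := by
    rw [← map_ofNat (algebraMap Fq κ)]
    simpa using two_ne_zero_of_odd_card Fq hq
  have := QuadraticAlgebra.isDomain_of_odd_natDegree hf
  have := QuadraticAlgebra.isIntegrallyClosed_of_squarefree hf
    (squarefree_X_pow_card_pow_sub_X Fq hn0) h2
  let K := FractionRing (HyperellipticRing Fq κ n)
  have hα0 : powNormElt Fq n c ≠ 0 := fun h0 ↦ hc0 (by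
    simpa using congrArg QuadraticAlgebra.im h0)
  set a : K := algebraMap _ K (powNormElt Fq n c) with ha
  have ha0 : a ≠ 0 := by simpa [ha] using hα0
  have hD0 : algebraMap _ K D ≠ 0 := by simpa using hD
  have hg0 : 0 < E.gcd m := Nat.gcd_pos_of_pos_right E hm
  obtain ⟨r, hr⟩ := Nat.gcd_dvd_right E m
  have hr0 : 0 < r := Nat.pos_of_ne_zero fun h0 ↦ by simp [h0] at hr; omega
  have hβ0 : a ^ E = (algebraMap _ K B / algebraMap _ K D) ^ m := by
    rw [div_pow, eq_div_iff (pow_ne_zero m hD0), ← map_pow, ← map_pow, ← map_pow, ← map_mul, h]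
  set β : K := (algebraMap _ K B / algebraMap _ K D) ^ (E.gcdA m) * a ^ (E.gcdB m) with hβ
  have hβm : β ^ m = a ^ (E.gcd m) := by
    have hx : ((algebraMap _ K B / algebraMap _ K D) ^ (E.gcdA m)) ^ m =
        a ^ ((E : ℤ) * E.gcdA m) := by
      rw [zpow_mul, zpow_natCast, hβ0, ← zpow_natCast, ← zpow_natCast, ← zpow_mul, ← zpow_mul,
        mul_comm]
    rw [hβ, mul_pow, hx, ← zpow_natCast (a ^ E.gcdB m), ← zpow_mul, ← zpow_add₀ ha0,
      mul_comm (E.gcdB m), ← Nat.gcd_eq_gcd_ab, zpow_natCast]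
  have hβ1 : β ^ r ≠ 0 := by
    intro h0
    have : β ^ m = 0 := by rw [hr, mul_comm, pow_mul, h0, zero_pow hg0.ne']
    exact pow_ne_zero _ ha0 (hβm ▸ this)
  obtain ⟨ζ, hζ⟩ : ∃ ζ : κ, algebraMap κ K ζ = a / β ^ r := by
    have : (a / β ^ r) ^ (E.gcd m) = 1 := by
      rw [div_pow, ← pow_mul, mul_comm r, ← hr, hβm, div_self (pow_ne_zero _ ha0)]
    have h3 := (IsAlgClosed.splits (X ^ (E.gcd m) - 1 : κ[X])).mem_range_of_isRoot
      (i := algebraMap κ K) (x := a / β ^ r) (X_pow_sub_C_ne_zero hg0 1) (by simp [this])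
    exact h3
  obtain ⟨η, hη⟩ := IsAlgClosed.exists_pow_nat_eq ζ hr0
  have hb : (algebraMap κ K η * β) ^ r = a := by
    rw [mul_pow, ← map_pow, hη, hζ, div_mul_cancel₀ _ hβ1]
  obtain ⟨b, hb'⟩ := IsIntegrallyClosed.exists_algebraMap_eq_of_isIntegral_pow
    (R := HyperellipticRing Fq κ n) hr0
      (x := algebraMap κ K η * β) (by rw [hb]; exact isIntegral_algebraMap)
  have hbα : b ^ r = powNormElt Fq n c := by
    apply IsFractionRing.injective (HyperellipticRing Fq κ n) K
    rw [map_pow, hb', hb]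
  rcases Nat.lt_or_ge r 2 with h3 | h3
  · have : r = 1 := by omega
    rw [hr, this, mul_one]
    exact Nat.gcd_dvd_left E m
  · have him := im_eq_zero_of_pow_eq_powNormElt Fq hq hn hn0 hc h3 hbα
    have hb2 : b = algebraMap κ[X] _ b.re := by ext1 <;> simp [him]
    rw [hb2, ← map_pow] at hbα
    have := congrArg QuadraticAlgebra.im hbα
    simp only [QuadraticAlgebra.algebraMap_im, im_powNormElt] at this
    exact absurd (C_eq_zero.mp (neg_eq_zero.mp this.symm)) hc0

theorem translateProd_powNormElt_eq_mul_pow [IsDomain (HyperellipticRing Fq κ n)]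
    (hq : Odd (Fintype.card Fq)) (hn : Even n) {m : ℕ} (hm : m ∣ Fintype.card Fq + 1) {T : κ}
    (hT : T ^ (Fintype.card Fq ^ n) = T) {c : κ} (hc : c ^ (Fintype.card Fq ^ n) = c) :
    ∃ (k : ℕ) (Q : HyperellipticRing Fq κ n), Q ≠ 0 ∧
      translateProd Fq hT (powNormElt Fq n c) = powNormElt Fq n c ^ k * Q ^ m ∧
      ((additivePoly Fq n c).eval T ≠ 0 → k = 0) := by
  by_cases h : (additivePoly Fq n c).eval T = 0
  · refine ⟨Fintype.card Fq, 1, one_ne_zero, ?_, fun h' ↦ absurd h h'⟩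
    rw [translateProd_powNormElt_of_eval_eq_zero Fq hT h, one_pow, mul_one]
  · obtain ⟨d, hd⟩ := hm
    refine ⟨0, ⟨1, -C c⟩ ^ d, pow_ne_zero _ fun h0 ↦ ?_, ?_, fun _ ↦ rfl⟩
    · exact one_ne_zero (congrArg QuadraticAlgebra.re h0)
    · rw [translateProd_powNormElt_of_eval_ne_zero Fq hq hn hT hc h, pow_zero, one_mul,
        ← pow_mul, hd, mul_comm]

theorem dvd_of_powNormElt_pow_mul_prod_eq [IsAlgClosed κ] (hq : Odd (Fintype.card Fq))
    (hn : Even n) (hn0 : 0 < n) {c : κ} (hc : c ^ (Fintype.card Fq ^ n) = c) (hc0 : c ≠ 0)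
    {m : ℕ} (hm : m ∣ Fintype.card Fq + 1) {ι : Type*} (Γ : Finset ι) {γ : ι → κ}
    (hγ : ∀ i ∈ Γ, γ i ^ (Fintype.card Fq ^ n) = γ i)
    (hsep : ∀ i ∈ Γ, ∃ T, (additivePoly Fq n c).eval T = 0 ∧
      (additivePoly Fq n (γ i)).eval T ≠ 0) {E : ℕ} {e : ι → ℕ}
    {D B : HyperellipticRing Fq κ n} (hD : D ≠ 0)
    (h : powNormElt Fq n c ^ E * (∏ i ∈ Γ, powNormElt Fq n (γ i) ^ e i) * D ^ m = B ^ m) :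
    m ∣ E := by
  have := QuadraticAlgebra.isDomain_of_odd_natDegree
    (odd_natDegree_X_pow_card_pow_sub_X Fq (κ := κ) hq hn0)
  have hcop : Nat.Coprime m (Fintype.card Fq) :=
    Nat.Coprime.coprime_dvd_left hm (by simp)
  induction Γ using Finset.cons_induction generalizing E e D B with
  | empty =>
    exact dvd_of_powNormElt_pow_mul_pow_eq Fq hq hn hn0 hc hc0
      (Nat.pos_of_dvd_of_pos hm (Nat.succ_pos _)) hD (by simpa using h)
  | cons j Γ hj ih =>
    obtain ⟨T, hT0, hT1⟩ := hsep j (Finset.mem_cons_self j Γ)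
    have hT : T ^ (Fintype.card Fq ^ n) = T := by
      have := eval_additivePoly_pow_card_add Fq hq hn hc T
      rw [hT0, zero_pow Fintype.card_ne_zero, zero_add, eq_comm] at this
      exact sub_eq_zero.mp ((mul_eq_zero.mp this).resolve_left (pow_ne_zero 2 hc0))
    have hk (i : ι) : ∃ (k : ℕ) (Q : HyperellipticRing Fq κ n), i ∈ Finset.cons j Γ hj →
        Q ≠ 0 ∧ translateProd Fq hT (powNormElt Fq n (γ i)) = powNormElt Fq n (γ i) ^ k * Q ^ m ∧
        ((additivePoly Fq n (γ i)).eval T ≠ 0 → k = 0) := by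
      by_cases hi : i ∈ Finset.cons j Γ hj
      · obtain ⟨k, Q, hQ⟩ := translateProd_powNormElt_eq_mul_pow Fq hq hn hm hT (hγ i hi)
        exact ⟨k, Q, fun _ ↦ hQ⟩
      · exact ⟨0, 0, fun hi' ↦ absurd hi' hi⟩
    choose k Q hkQ using hk
    have hkj : k j = 0 := (hkQ j (Finset.mem_cons_self j Γ)).2.2 hT1
    have h1 := congrArg (translateProd Fq hT) h
    simp only [map_mul, map_pow, map_prod,
      translateProd_powNormElt_of_eval_eq_zero Fq hT hT0] at h1
    have h2 : ∏ i ∈ Finset.cons j Γ hj, translateProd Fq hT (powNormElt Fq n (γ i)) ^ e i =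
        (∏ i ∈ Γ, powNormElt Fq n (γ i) ^ (k i * e i)) *
          (∏ i ∈ Finset.cons j Γ hj, Q i ^ e i) ^ m := by
      rw [← Finset.prod_pow, Finset.prod_congr rfl fun i hi ↦ by
        rw [(hkQ i hi).2.1, mul_pow, ← pow_mul, ← pow_mul, mul_comm m, pow_mul (Q i)],
        Finset.prod_mul_distrib, Finset.prod_cons, hkj, zero_mul, pow_zero, one_mul]
    rw [h2, ← pow_mul] at h1
    refine hcop.dvd_of_dvd_mul_left (ih (fun i hi ↦ hγ i (Finset.mem_cons_of_mem hi))
      (fun i hi ↦ hsep i (Finset.mem_cons_of_mem hi)) (e := fun i ↦ k i * e i)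
      (D := (∏ i ∈ Finset.cons j Γ hj, Q i ^ e i) * translateProd Fq hT D)
      (B := translateProd Fq hT B) ?_ ?_)
    · exact mul_ne_zero (Finset.prod_ne_zero_iff.mpr fun i hi ↦ pow_ne_zero _ (hkQ i hi).1)
        (translateProd_ne_zero Fq hT hD)
    · rw [← h1, mul_pow]
      ring

end HyperellipticRing

namespace HyperellipticRing

variable (Fq : Type*) [Field Fq] [Fintype Fq] {κ : Type*} [Field κ] {n : ℕ}

theorem eq_of_two_mul_sub_one_mul_eq {q j l d : ℕ} (hq : 2 ≤ q)
    (h : 2 * (q - 1) * (q * j + 1) = 2 * (q - 1) * ((q * l + 1) * q ^ d)) : j = l ∧ d = 0 := by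
  have h1 : q * j + 1 = (q * l + 1) * q ^ d := Nat.eq_of_mul_eq_mul_left (by omega) h
  rcases Nat.eq_zero_or_pos d with rfl | hd
  · refine ⟨?_, rfl⟩
    rw [pow_zero, mul_one] at h1
    exact Nat.eq_of_mul_eq_mul_left (by omega) (Nat.add_right_cancel h1)
  · have h2 : q ∣ q * j + 1 := h1 ▸ (dvd_pow_self q hd.ne').mul_left _
    have h3 : q ∣ 1 := (Nat.dvd_add_right (dvd_mul_right q j)).mp h2
    have := Nat.le_of_dvd one_pos h3
    omega

theorem two_mul_sub_one_mul_lt {q ν N j d : ℕ} (hq : 2 ≤ q)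
    (hν : 2 * q ^ 2 * (N + 1) ≤ q ^ ν) (hj : j < N) (hd : d ≤ ν) :
    2 * (q - 1) * ((q * j + 1) * q ^ d) < q ^ (2 * ν) - 1 := by
  have h1 : q ^ d ≤ q ^ ν := Nat.pow_le_pow_right (by omega) hd
  have h2 : q * j + 1 ≤ q * N := by nlinarith
  have h3 : 2 * (q - 1) * ((q * j + 1) * q ^ d) ≤ 2 * q * ((q * N) * q ^ ν) := by
    gcongr
    omega
  have h4 : q ^ (2 * ν) = q ^ ν * q ^ ν := by rw [two_mul, pow_add]
  have h5 : 2 * q ^ 2 * (N + 1) * q ^ ν ≤ q ^ ν * q ^ ν := Nat.mul_le_mul_right _ hν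
  have h6 : 2 * q * ((q * N) * q ^ ν) + 2 * q ^ 2 * q ^ ν = 2 * q ^ 2 * (N + 1) * q ^ ν := by
    ring
  have h7 : 2 ≤ 2 * q ^ 2 * q ^ ν := by
    have : 0 < q ^ 2 * q ^ ν := by positivity
    nlinarith
  omega

theorem pow_card_pow_injective [Algebra Fq κ] (i : ℕ) :
    Function.Injective fun x : κ ↦ x ^ (Fintype.card Fq ^ i) := by
  intro x y h
  have h1 := add_pow_card_pow_of_algebra Fq i (x - y) y
  rw [sub_add_cancel] at h1
  have h2 : (x - y) ^ (Fintype.card Fq ^ i) = 0 := by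
    simp only at h
    rw [h] at h1
    simpa using h1
  exact sub_eq_zero.mp (eq_zero_of_pow_eq_zero h2)

variable (κ) in
theorem exists_pairwise_pow_ne [Algebra Fq κ] [IsAlgClosed κ] (N : ℕ) :
    ∃ n : ℕ, Even n ∧ 2 ≤ n ∧ ∃ c : Fin N → κ,
      (∀ j, c j ≠ 0) ∧ (∀ j, c j ^ (Fintype.card Fq ^ n) = c j) ∧
      ∀ (j l : Fin N) (i k : Fin n), (j, i) ≠ (l, k) →
        (c j ^ (Fintype.card Fq ^ (i : ℕ))) ^ (2 * (Fintype.card Fq - 1)) ≠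
          (c l ^ (Fintype.card Fq ^ (k : ℕ))) ^ (2 * (Fintype.card Fq - 1)) := by
  set q := Fintype.card Fq with hqdef
  have hq : 2 ≤ q := Fintype.one_lt_card
  set ν := N + 3 with hν'
  have hν : 2 * q ^ 2 * (N + 1) ≤ q ^ ν := by
    have h1 : N + 1 ≤ q ^ N := Nat.lt_pow_self hq
    calc 2 * q ^ 2 * (N + 1) ≤ q * q ^ 2 * q ^ N := by gcongr
      _ = q ^ ν := by rw [hν']; ring
  have hM : 1 < q ^ (2 * ν) := Nat.one_lt_pow (by omega) hq
  have hM0 : ((q ^ (2 * ν) - 1 : ℕ) : κ) ≠ 0 := by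
    rw [Nat.cast_sub hM.le, Nat.cast_pow, hqdef, ← map_natCast (algebraMap Fq κ),
      Nat.cast_card_eq_zero, map_zero, zero_pow (by omega)]
    simp
  have : NeZero ((q ^ (2 * ν) - 1 : ℕ) : κ) := ⟨hM0⟩
  obtain ⟨ω, hω⟩ := HasEnoughRootsOfUnity.exists_primitiveRoot κ (q ^ (2 * ν) - 1)
  have hω0 : ω ≠ 0 := hω.ne_zero (by omega)
  have hωq : ω ^ (q ^ (2 * ν)) = ω := by
    rw [← Nat.sub_add_cancel hM.le, pow_succ, hω.pow_eq_one, one_mul]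
  have hmain (j l : Fin N) (d : ℕ) (hd : d ≤ ν)
      (h : (ω ^ (q * j + 1)) ^ (2 * (q - 1)) =
        ((ω ^ (q * l + 1)) ^ (2 * (q - 1))) ^ q ^ d) : j = l ∧ d = 0 := by
    rw [← pow_mul, ← pow_mul, ← pow_mul] at h
    have h0 := two_mul_sub_one_mul_lt hq hν j.2 (Nat.zero_le ν)
    rw [pow_zero, mul_one, mul_comm] at h0
    have h1 := two_mul_sub_one_mul_lt hq hν l.2 hd
    rw [← mul_assoc, mul_comm (2 * (q - 1)), mul_assoc] at h1
    have := hω.pow_inj h0 h1 h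
    obtain ⟨h2, h3⟩ := eq_of_two_mul_sub_one_mul_eq (j := j) (l := l) (d := d) hq (by
      rw [mul_comm, this]; ring)
    exact ⟨Fin.ext h2, h3⟩
  have hle (j l : Fin N) (i k : Fin (2 * ν)) (hik : i ≤ k)
      (h : ((ω ^ (q * j + 1)) ^ q ^ (i : ℕ)) ^ (2 * (q - 1)) =
        ((ω ^ (q * l + 1)) ^ q ^ (k : ℕ)) ^ (2 * (q - 1))) : (j, i) = (l, k) := by
    obtain ⟨d, hd⟩ := Nat.exists_eq_add_of_le (Fin.le_def.mp hik)
    have hk := k.2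
    have h1 : (ω ^ (q * j + 1)) ^ (2 * (q - 1)) =
        ((ω ^ (q * l + 1)) ^ (2 * (q - 1))) ^ q ^ d := by
      apply pow_card_pow_injective Fq (i : ℕ)
      simp only [← hqdef]
      rw [pow_right_comm, h, pow_right_comm, hd, pow_add q, mul_comm (q ^ (i : ℕ)), pow_mul]
    rcases le_or_gt d ν with h2 | h2
    · obtain ⟨rfl, rfl⟩ := hmain j l d h2 h1
      exact Prod.ext rfl (Fin.ext (by simpa using hd.symm))
    · have h3 : (ω ^ (q * l + 1)) ^ (2 * (q - 1)) =
          ((ω ^ (q * j + 1)) ^ (2 * (q - 1))) ^ q ^ (2 * ν - d) := by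
        rw [h1, ← pow_mul _ (q ^ d), ← pow_add, Nat.add_sub_cancel' (by omega), ← pow_mul ω,
          pow_right_comm ω, hωq]
      have := (hmain l j (2 * ν - d) (by omega) h3).2
      omega
  refine ⟨2 * ν, even_two_mul ν, by omega, fun j ↦ ω ^ (q * j + 1),
    fun j ↦ pow_ne_zero _ hω0, fun j ↦ by rw [pow_right_comm, hωq], fun j l i k hne h ↦ hne ?_⟩
  rcases le_total i k with hik | hik
  · exact hle j l i k hik h
  · exact (hle l j k i hik h.symm).symm

theorem derivative_additivePoly [Algebra Fq κ] (hn : 0 < n) (c : κ) :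
    derivative (additivePoly Fq n c) = -C (c ^ 2) := by
  rw [additivePoly_eq_sum, derivative_sum, Finset.sum_eq_single 0]
  · rw [pow_zero, derivative_C_mul_X_pow]
    simp
  · intro i _ hi
    have : ((Fintype.card Fq ^ i : ℕ) : κ) = 0 := by
      rw [Nat.cast_pow, ← map_natCast (algebraMap Fq κ), Nat.cast_card_eq_zero, map_zero,
        zero_pow hi]
    rw [derivative_C_mul_X_pow, this, mul_zero, C_0, zero_mul]
  · exact fun h ↦ absurd (Finset.mem_range.mpr hn) h

theorem exists_eval_additivePoly_eq_zero_and_ne_zero [Algebra Fq κ] [IsAlgClosed κ] (hn : 2 ≤ n)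
    {c γ : κ} (hc : c ≠ 0) (hγ : γ ≠ 0)
    (h : c ^ (2 * (Fintype.card Fq - 1)) ≠ γ ^ (2 * (Fintype.card Fq - 1))) :
    ∃ T, (additivePoly Fq n c).eval T = 0 ∧ (additivePoly Fq n γ).eval T ≠ 0 := by
  by_contra! hcon
  have hq : 2 ≤ Fintype.card Fq := Fintype.one_lt_card
  have hc0 : additivePoly Fq n c ≠ 0 := by
    rintro h0
    have := natDegree_additivePoly Fq (n := n) (by omega) hc
    rw [h0, natDegree_zero] at this
    exact absurd this.symm (by positivity)
  have hγ0 : additivePoly Fq n γ ≠ 0 := by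
    rintro h0
    have := natDegree_additivePoly Fq (n := n) (by omega) hγ
    rw [h0, natDegree_zero] at this
    exact absurd this.symm (by positivity)
  have hsep : (additivePoly Fq n c).Separable := by
    refine ⟨0, C (-(c ^ 2)⁻¹), ?_⟩
    rw [derivative_additivePoly Fq (by omega), zero_mul, zero_add, ← C_neg, ← C_mul, neg_mul_neg,
      inv_mul_cancel₀ (pow_ne_zero 2 hc), C_1]
  obtain ⟨k, hk⟩ := (IsAlgClosed.dvd_iff_roots_le_roots hc0 hγ0).mpr <|
    (Multiset.le_iff_subset (nodup_roots hsep)).mpr fun T hT ↦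
      (mem_roots hγ0).mpr (hcon T (isRoot_of_mem_roots hT))
  have hk0 : k ≠ 0 := right_ne_zero_of_mul (hk ▸ hγ0)
  have hkdeg : k.natDegree = 0 := by
    have := congrArg natDegree hk
    rw [natDegree_mul hc0 hk0, natDegree_additivePoly Fq (by omega) hc,
      natDegree_additivePoly Fq (by omega) hγ] at this
    omega
  rw [eq_C_of_natDegree_eq_zero hkdeg] at hk
  have h1 := congrArg (coeff · (Fintype.card Fq ^ 0)) hk
  have h2 := congrArg (coeff · (Fintype.card Fq ^ 1)) hk
  simp only [coeff_mul_C, coeff_additivePoly_card_pow Fq _ (show 0 < n by omega),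
    coeff_additivePoly_card_pow Fq _ (show 1 < n by omega)] at h1 h2
  apply h
  obtain ⟨r, hr⟩ : ∃ r, Fintype.card Fq = r + 1 := ⟨_, (Nat.sub_add_cancel (by omega)).symm⟩
  rw [hr] at h2 ⊢
  rw [pow_one, pow_succ (γ ^ 2), pow_succ (c ^ 2)] at h2
  rw [Nat.add_sub_cancel, pow_mul, pow_mul]
  refine mul_right_cancel₀ (mul_ne_zero (pow_ne_zero 2 hγ) (pow_ne_zero 2 hc)) ?_
  linear_combination (-(c ^ 2) ^ r * c ^ 2) * h1 - c ^ 2 * h2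

end HyperellipticRing

namespace HyperellipticRing

variable (Fq : Type*) [Field Fq] [Fintype Fq] {κ : Type*} [Field κ] [Algebra Fq κ] {n : ℕ}

theorem mem_range_algebraMap_of_pow_card_eq {x : κ} (hx : x ^ Fintype.card Fq = x) :
    x ∈ (algebraMap Fq κ).range :=
  (splits_X_pow_nat_card_sub_X (K := Fq)).mem_range_of_isRoot
    (FiniteField.X_pow_card_sub_X_ne_zero _ Finite.one_lt_card) (by simp [hx])

/-- The Frobenius automorphism `c ↦ c ^ q` acting on coefficients. -/
noncomputable def coeffFrobenius : κ[X] →+* κ[X] :=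
  Polynomial.mapRingHom (FiniteField.frobeniusAlgHom Fq κ : κ →+* κ)

theorem exists_map_eq_of_coeffFrobenius_eq {p : κ[X]} (hp : coeffFrobenius Fq p = p) :
    ∃ p₀ : Fq[X], p₀.map (algebraMap Fq κ) = p := by
  refine (lifts_iff_coeff_lifts p).mpr fun k ↦ mem_range_algebraMap_of_pow_card_eq Fq ?_
  simpa [coeffFrobenius] using congrArg (coeff · k) hp

theorem coeffFrobenius_additivePoly (c : κ) : coeffFrobenius Fq (additivePoly Fq n c) =
    additivePoly Fq n (c ^ Fintype.card Fq) := by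
  rw [additivePoly, map_twistedTrace, additivePoly]
  simp [coeffFrobenius]

theorem coeffFrobenius_algebraMap (a : Fq) :
    coeffFrobenius Fq (algebraMap Fq κ[X] a) = algebraMap Fq κ[X] a := by
  simp [coeffFrobenius, IsScalarTower.algebraMap_apply Fq κ κ[X]]

/-- The Frobenius automorphism acting on coefficients of elements of the coordinate ring. -/
noncomputable def frobenius : HyperellipticRing Fq κ n →+* HyperellipticRing Fq κ n :=
  QuadraticAlgebra.mapRingHom (coeffFrobenius Fq) (by simp [coeffFrobenius])

theorem frobenius_powNormElt (c : κ) : frobenius Fq (powNormElt Fq n c) =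
    powNormElt Fq n (c ^ Fintype.card Fq) := by
  ext1
  · simp only [frobenius, QuadraticAlgebra.re_mapRingHom_apply, re_powNormElt, map_pow, map_add,
      coeffFrobenius_additivePoly, coeffFrobenius_algebraMap]
  · simp [frobenius, coeffFrobenius]

variable (κ n) in
/-- Extension of scalars from `𝔽_q` to `κ`. -/
noncomputable def baseChange : HyperellipticRing Fq Fq n →+* HyperellipticRing Fq κ n :=
  QuadraticAlgebra.mapRingHom (Polynomial.mapRingHom (algebraMap Fq κ)) (by simp)

theorem baseChange_injective : Function.Injective (baseChange Fq κ n) :=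
  QuadraticAlgebra.mapRingHom_injective _ (map_injective _ (algebraMap Fq κ).injective)

theorem baseChange_star (z : HyperellipticRing Fq Fq n) :
    baseChange Fq κ n (star z) = star (baseChange Fq κ n z) := by
  ext1 <;> simp [baseChange]

theorem norm_baseChange (z : HyperellipticRing Fq Fq n) :
    (baseChange Fq κ n z).norm = z.norm.map (algebraMap Fq κ) := by
  simp [baseChange, QuadraticAlgebra.norm_def]

theorem exists_baseChange_eq_of_frobenius_eq {z : HyperellipticRing Fq κ n}
    (hz : frobenius Fq z = z) : ∃ z₀, baseChange Fq κ n z₀ = z := by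
  obtain ⟨p, hp⟩ := exists_map_eq_of_coeffFrobenius_eq Fq (congrArg QuadraticAlgebra.re hz)
  obtain ⟨r, hr⟩ := exists_map_eq_of_coeffFrobenius_eq Fq (congrArg QuadraticAlgebra.im hz)
  exact ⟨⟨p, r⟩, QuadraticAlgebra.ext hp hr⟩

theorem isIntegral_baseChange [Algebra.IsAlgebraic Fq κ] : (baseChange Fq κ n).IsIntegral := by
  have hC (a : κ) : (baseChange Fq κ n).IsIntegralElem (algebraMap κ[X] _ (C a)) := by
    obtain ⟨p, hp, hpa⟩ := Algebra.IsIntegral.isIntegral (R := Fq) a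
    refine ⟨p.map (algebraMap Fq _), hp.map _, ?_⟩
    have hcomp : (baseChange Fq κ n).comp (algebraMap Fq _) =
        ((algebraMap κ[X] (HyperellipticRing Fq κ n)).comp C).comp (algebraMap Fq κ) := by
      ext x <;>
        simp [baseChange, IsScalarTower.algebraMap_apply Fq Fq[X] (HyperellipticRing Fq Fq n)]
    rw [eval₂_map, hcomp, ← RingHom.comp_apply, ← hom_eval₂, hpa, map_zero]
  have hpoly (p : κ[X]) : (baseChange Fq κ n).IsIntegralElem (algebraMap κ[X] _ p) := by
    induction p using Polynomial.induction_on' with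
    | add p r hp hr => rw [map_add]; exact hp.add _ hr
    | monomial k a =>
      rw [← C_mul_X_pow_eq_monomial, map_mul]
      refine (hC a).mul _ ?_
      have : algebraMap κ[X] (HyperellipticRing Fq κ n) (X ^ k) =
          baseChange Fq κ n (algebraMap Fq[X] _ (X ^ k)) := by
        ext1 <;> simp [baseChange, -map_pow]
      rw [this]
      exact RingHom.isIntegralElem_map _
  intro z
  have hz : z = algebraMap κ[X] _ z.re +
      algebraMap κ[X] _ z.im * baseChange Fq κ n QuadraticAlgebra.omega := by
    ext1 <;> simp [baseChange]
  rw [hz]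
  exact (hpoly _).add _ ((hpoly _).mul _ (RingHom.isIntegralElem_map _))

theorem isCoprime_of_baseChange [Algebra.IsAlgebraic Fq κ] {a b : HyperellipticRing Fq Fq n}
    (h : IsCoprime (baseChange Fq κ n a) (baseChange Fq κ n b)) : IsCoprime a b := by
  let := (baseChange Fq κ n).toAlgebra
  have : Algebra.IsIntegral (HyperellipticRing Fq Fq n) (HyperellipticRing Fq κ n) :=
    ⟨isIntegral_baseChange Fq⟩
  rw [← Ideal.isCoprime_span_singleton_iff, Ideal.isCoprime_iff_sup_eq]
  by_contra hne
  obtain ⟨M, hM, hle⟩ := Ideal.exists_le_maximal _ hne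
  obtain ⟨Q, hQ, hQM⟩ := Ideal.exists_ideal_over_maximal_of_isIntegral
    (S := HyperellipticRing Fq κ n) M (by
      rw [RingHom.algebraMap_toAlgebra,
        (RingHom.injective_iff_ker_eq_bot _).mp (baseChange_injective Fq)]
      exact bot_le)
  have ha : a ∈ Q.comap (algebraMap _ _) :=
    hQM ▸ hle (Ideal.mem_sup_left (Ideal.mem_span_singleton_self a))
  have hb : b ∈ Q.comap (algebraMap _ _) :=
    hQM ▸ hle (Ideal.mem_sup_right (Ideal.mem_span_singleton_self b))
  obtain ⟨x, y, hxy⟩ := h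
  exact hQ.ne_top ((Ideal.eq_top_iff_one Q).mpr
    (hxy ▸ Q.add_mem (Q.mul_mem_left x ha) (Q.mul_mem_left y hb)))

theorem one_sub_mem_of_powNormElt_mem (hq : Odd (Fintype.card Fq)) (hn : Even n) {c : κ}
    (hc : c ^ (Fintype.card Fq ^ n) = c) {P : Ideal (HyperellipticRing Fq κ n)} (hP : P.IsPrime)
    (h : powNormElt Fq n c ∈ P) : (⟨1, -C c⟩ : HyperellipticRing Fq κ n) ∈ P := by
  have h1 : algebraMap κ[X] (HyperellipticRing Fq κ n)
      (additivePoly Fq n c - algebraMap Fq κ[X] 2⁻¹) ∈ P := by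
    apply hP.mem_of_pow_mem (Fintype.card Fq + 1)
    rw [← map_pow, ← norm_powNormElt Fq hq hn hc, QuadraticAlgebra.algebraMap_norm_eq_mul_star]
    exact P.mul_mem_right _ h
  obtain ⟨w, hw⟩ := sub_dvd_pow_sub_pow (additivePoly Fq n c + algebraMap Fq κ[X] 2⁻¹) 1
    ((Fintype.card Fq + 1) / 2)
  have h2 : (⟨1, -C c⟩ : HyperellipticRing Fq κ n) = powNormElt Fq n c -
      algebraMap κ[X] _ (additivePoly Fq n c - algebraMap Fq κ[X] 2⁻¹) * algebraMap κ[X] _ w := by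
    have h3 : additivePoly Fq n c + algebraMap Fq κ[X] 2⁻¹ - 1 =
        additivePoly Fq n c - algebraMap Fq κ[X] 2⁻¹ := by
      linear_combination two_mul_algebraMap_half Fq (A := κ[X]) hq
    rw [one_pow, h3] at hw
    rw [← map_mul, ← hw]
    ext1
    · simp only [QuadraticAlgebra.re_sub, re_powNormElt, QuadraticAlgebra.algebraMap_re]
      ring
    · simp only [QuadraticAlgebra.im_sub, im_powNormElt, QuadraticAlgebra.algebraMap_im, sub_zero]
  rw [h2]
  exact P.sub_mem h (P.mul_mem_right _ h1)

theorem isCoprime_powNormElt (hq : Odd (Fintype.card Fq)) (hn : Even n) {c d : κ}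
    (hc : c ^ (Fintype.card Fq ^ n) = c) (hd : d ^ (Fintype.card Fq ^ n) = d) (h : c ≠ d) :
    IsCoprime (powNormElt Fq n c) (powNormElt Fq n d) := by
  rw [← Ideal.isCoprime_span_singleton_iff, Ideal.isCoprime_iff_sup_eq]
  by_contra hne
  obtain ⟨M, hM, hle⟩ := Ideal.exists_le_maximal _ hne
  have h1 := one_sub_mem_of_powNormElt_mem Fq hq hn hc hM.isPrime
    (hle (Ideal.mem_sup_left (Ideal.mem_span_singleton_self _)))
  have h2 := one_sub_mem_of_powNormElt_mem Fq hq hn hd hM.isPrime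
    (hle (Ideal.mem_sup_right (Ideal.mem_span_singleton_self _)))
  have h3 : (1 : HyperellipticRing Fq κ n) = algebraMap κ[X] _ (C (d - c)⁻¹) *
      (algebraMap κ[X] _ (C d) * ⟨1, -C c⟩ - algebraMap κ[X] _ (C c) * ⟨1, -C d⟩) := by
    have h4 : C (d - c)⁻¹ * (C d - C c) = (1 : κ[X]) := by
      rw [← C_sub, ← C_mul, inv_mul_cancel₀ (sub_ne_zero.mpr h.symm), C_1]
    ext1
    · simp only [QuadraticAlgebra.re_mul, QuadraticAlgebra.re_sub, QuadraticAlgebra.algebraMap_re,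
        QuadraticAlgebra.algebraMap_im, QuadraticAlgebra.im_sub, QuadraticAlgebra.im_mul,
        QuadraticAlgebra.re_one]
      linear_combination -h4
    · simp only [QuadraticAlgebra.re_mul, QuadraticAlgebra.re_sub, QuadraticAlgebra.algebraMap_re,
        QuadraticAlgebra.algebraMap_im, QuadraticAlgebra.im_sub, QuadraticAlgebra.im_mul,
        QuadraticAlgebra.im_one]
      ring
  exact hM.ne_top ((Ideal.eq_top_iff_one M).mpr (h3 ▸ M.mul_mem_left _
    (M.sub_mem (M.mul_mem_left _ h1) (M.mul_mem_left _ h2))))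

end HyperellipticRing

theorem Finset.prod_range_succ_shift {M : Type*} [CommMonoid M] (f : ℕ → M) {n : ℕ}
    (h : f n = f 0) : ∏ i ∈ Finset.range n, f (i + 1) = ∏ i ∈ Finset.range n, f i := by
  cases n with
  | zero => rfl
  | succ k => rw [Finset.prod_range_succ, Finset.prod_range_succ', h]

namespace HyperellipticRing

theorem pow_pow_card_pow_eq (Fq : Type*) [Fintype Fq] {κ : Type*} [Monoid κ] {n : ℕ} {c : κ}
    (hc : c ^ (Fintype.card Fq ^ n) = c) (i : ℕ) :
    (c ^ Fintype.card Fq ^ i) ^ (Fintype.card Fq ^ n) = c ^ Fintype.card Fq ^ i := by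
  rw [pow_right_comm, hc]

variable (Fq : Type*) [Field Fq] [Fintype Fq] {κ : Type*} [Field κ] [Algebra Fq κ] {n : ℕ}

theorem exists_baseChange_eq_prod_powNormElt {c : κ} (hc : c ^ (Fintype.card Fq ^ n) = c) :
    ∃ z, baseChange Fq κ n z =
      ∏ i ∈ Finset.range n, powNormElt Fq n (c ^ Fintype.card Fq ^ i) := by
  apply exists_baseChange_eq_of_frobenius_eq
  simp only [map_prod, frobenius_powNormElt, ← pow_mul, ← pow_succ]
  exact Finset.prod_range_succ_shift (fun i ↦ powNormElt Fq n (c ^ Fintype.card Fq ^ i))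
    (by simp [hc])

theorem exists_map_eq_prod_additivePoly_sub {c : κ} (hc : c ^ (Fintype.card Fq ^ n) = c) :
    ∃ p : Fq[X], p.map (algebraMap Fq κ) = ∏ i ∈ Finset.range n,
      (additivePoly Fq n (c ^ Fintype.card Fq ^ i) - algebraMap Fq κ[X] 2⁻¹) := by
  apply exists_map_eq_of_coeffFrobenius_eq
  simp only [map_prod, map_sub, coeffFrobenius_additivePoly, coeffFrobenius_algebraMap, ← pow_mul,
    ← pow_succ]
  exact Finset.prod_range_succ_shift
    (fun i ↦ additivePoly Fq n (c ^ Fintype.card Fq ^ i) - algebraMap Fq κ[X] 2⁻¹) (by simp [hc])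

theorem exists_norm_eq_pow (hq : Odd (Fintype.card Fq)) (hn : Even n) {c : κ}
    (hc : c ^ (Fintype.card Fq ^ n) = c) {z : HyperellipticRing Fq Fq n}
    (hz : baseChange Fq κ n z =
      ∏ i ∈ Finset.range n, powNormElt Fq n (c ^ Fintype.card Fq ^ i)) :
    ∃ p : Fq[X], z.norm = p ^ (Fintype.card Fq + 1) := by
  obtain ⟨p, hp⟩ := exists_map_eq_prod_additivePoly_sub Fq hc
  refine ⟨p, map_injective _ (algebraMap Fq κ).injective ?_⟩
  rw [← norm_baseChange, hz, map_prod, Polynomial.map_pow, hp, ← Finset.prod_pow]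
  exact Finset.prod_congr rfl fun i _ ↦ norm_powNormElt Fq hq hn (pow_pow_card_pow_eq Fq hc i)

theorem isCoprime_star_of_baseChange_eq_prod [Algebra.IsAlgebraic Fq κ]
    (hq : Odd (Fintype.card Fq)) (hn : Even n) {c : κ} (hc0 : c ≠ 0)
    (hc : c ^ (Fintype.card Fq ^ n) = c)
    (hne : ∀ i k : Fin n, i ≠ k → (c ^ Fintype.card Fq ^ (i : ℕ)) ^ (2 * (Fintype.card Fq - 1)) ≠
      (c ^ Fintype.card Fq ^ (k : ℕ)) ^ (2 * (Fintype.card Fq - 1)))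
    {z : HyperellipticRing Fq Fq n} (hz : baseChange Fq κ n z =
      ∏ i ∈ Finset.range n, powNormElt Fq n (c ^ Fintype.card Fq ^ i)) :
    IsCoprime z (star z) := by
  have h2 : (2 : κ) ≠ 0 := by
    rw [← map_ofNat (algebraMap Fq κ) 2]
    exact (_root_.map_ne_zero _).mpr (two_ne_zero_of_odd_card Fq hq)
  apply isCoprime_of_baseChange Fq (κ := κ)
  rw [baseChange_star, hz, star_prod]
  simp only [star_powNormElt]
  refine IsCoprime.prod_left fun i hi ↦ IsCoprime.prod_right fun k hk ↦
    isCoprime_powNormElt Fq hq hn (pow_pow_card_pow_eq Fq hc i) ?_ fun h ↦ ?_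
  · rw [(hq.pow : Odd (Fintype.card Fq ^ n)).neg_pow, pow_pow_card_pow_eq Fq hc k]
  · by_cases hik : i = k
    · subst hik
      have : (2 : κ) * c ^ Fintype.card Fq ^ i = 0 := by linear_combination h
      simp [h2, hc0] at this
    · refine hne ⟨i, Finset.mem_range.mp hi⟩ ⟨k, Finset.mem_range.mp hk⟩ (by simpa using hik) ?_
      rw [h, (even_two_mul _).neg_pow]

theorem powNormElt_ne_zero {c : κ} (hc0 : c ≠ 0) : powNormElt Fq n c ≠ 0 :=
  fun h ↦ hc0 (by simpa using congrArg QuadraticAlgebra.im h)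

theorem exists_baseChange_eq_algebraMap_C_of_isUnit (hq : Odd (Fintype.card Fq)) (hn0 : 0 < n)
    {u : HyperellipticRing Fq Fq n} (hu : IsUnit u) :
    ∃ a : κ, baseChange Fq κ n u = algebraMap κ[X] _ (C a) := by
  have hnorm := QuadraticAlgebra.isUnit_iff_norm_isUnit.mp hu
  have him : u.im = 0 := by
    by_contra h
    have hf := odd_natDegree_X_pow_card_pow_sub_X Fq (κ := Fq) hq hn0
    have := QuadraticAlgebra.natDegree_le_natDegree_norm hf h
    rw [natDegree_eq_zero_of_isUnit hnorm] at this
    exact hf.pos.ne' (Nat.le_zero.mp this)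
  have hre : IsUnit u.re := by
    rw [QuadraticAlgebra.norm_def, him] at hnorm
    simpa using hnorm
  obtain ⟨a, -, hau⟩ := Polynomial.isUnit_iff.mp hre
  refine ⟨algebraMap Fq κ a, ?_⟩
  ext1 <;> simp [baseChange, him, ← hau]

theorem dvd_of_associated_prod_pow [IsAlgClosed κ] (hq : Odd (Fintype.card Fq)) (hn : Even n)
    (hn2 : 2 ≤ n) {N m : ℕ} (hm0 : 0 < m) (hm : m ∣ Fintype.card Fq + 1) {c : Fin N → κ}
    (hc0 : ∀ j, c j ≠ 0) (hc : ∀ j, c j ^ (Fintype.card Fq ^ n) = c j)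
    (hne : ∀ j l (i k : Fin n), (j, i) ≠ (l, k) →
      (c j ^ Fintype.card Fq ^ (i : ℕ)) ^ (2 * (Fintype.card Fq - 1)) ≠
      (c l ^ Fintype.card Fq ^ (k : ℕ)) ^ (2 * (Fintype.card Fq - 1)))
    {z : Fin N → HyperellipticRing Fq Fq n} (hz : ∀ j, baseChange Fq κ n (z j) =
      ∏ i ∈ Finset.range n, powNormElt Fq n (c j ^ Fintype.card Fq ^ i))
    {v : Fin N → ℕ} {b : HyperellipticRing Fq Fq n} (h : Associated (b ^ m) (∏ j, z j ^ v j))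
    (j : Fin N) : m ∣ v j := by
  obtain ⟨u, hu⟩ := h
  obtain ⟨a, hau⟩ := exists_baseChange_eq_algebraMap_C_of_isUnit Fq (κ := κ) hq
    (zero_lt_two.trans_le hn2) u.isUnit
  obtain ⟨d, hd⟩ := IsAlgClosed.exists_pow_nat_eq a hm0
  have hprod : (∏ x : Fin N × Fin n,
      powNormElt Fq n (c x.1 ^ Fintype.card Fq ^ (x.2 : ℕ)) ^ v x.1) =
      (baseChange Fq κ n b * algebraMap κ[X] _ (C d)) ^ m := by
    rw [mul_pow, ← map_pow, ← map_pow, ← map_pow, hd, ← hau, ← map_mul, hu, map_prod,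
      Fintype.prod_prod_type]
    refine Finset.prod_congr rfl fun l _ ↦ ?_
    rw [map_pow, hz, Finset.prod_range, ← Finset.prod_pow]
  let i₀ : Fin n := ⟨0, zero_lt_two.trans_le hn2⟩
  rw [← Finset.mul_prod_erase _ _ (Finset.mem_univ (j, i₀))] at hprod
  refine dvd_of_powNormElt_pow_mul_prod_eq Fq hq hn (zero_lt_two.trans_le hn2)
    (pow_pow_card_pow_eq Fq (hc j) i₀) (pow_ne_zero _ (hc0 j)) hm
    (Finset.univ.erase (j, i₀)) (γ := fun x ↦ c x.1 ^ Fintype.card Fq ^ (x.2 : ℕ))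
    (e := fun x ↦ v x.1) (D := 1)
    (B := baseChange Fq κ n b * algebraMap κ[X] _ (C d))
    (fun x _ ↦ pow_pow_card_pow_eq Fq (hc x.1) x.2)
    (fun x hx ↦ exists_eval_additivePoly_eq_zero_and_ne_zero Fq hn2 (pow_ne_zero _ (hc0 j))
      (pow_ne_zero _ (hc0 x.1)) (hne j x.1 i₀ x.2 (Finset.ne_of_mem_erase hx).symm)) one_ne_zero ?_
  rw [one_pow, mul_one]
  exact hprod

end HyperellipticRing

theorem ClassGroup.exists_injective_of_associated_pow_imp_dvd {O : Type*} [CommRing O]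
    [IsDedekindDomain O] {N m : ℕ} (hm : 0 < m) {I : Fin N → Ideal O} {z : Fin N → O}
    (hz : ∀ j, z j ≠ 0) (hI : ∀ j, I j ^ m = Ideal.span {z j})
    (hdvd : ∀ (v : Fin N → ℕ) (b : O), Associated (b ^ m) (∏ j, z j ^ v j) → ∀ j, m ∣ v j) :
    ∃ φ : (Fin N → ZMod m) →+ Additive (ClassGroup O), Function.Injective φ := by
  have : NeZero m := ⟨hm.ne'⟩
  have hprin (x : nonZeroDivisors (Ideal O)) :
      ClassGroup.mk0 x = 1 ↔ (x : Ideal O).IsPrincipal := ClassGroup.mk0_eq_one_iff x.2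
  have hI0 (j : Fin N) : I j ∈ nonZeroDivisors (Ideal O) := by
    refine mem_nonZeroDivisors_of_ne_zero fun h ↦ hz j ?_
    rw [← Ideal.span_singleton_eq_bot, ← hI, h, zero_pow hm.ne', Ideal.zero_eq_bot]
  obtain ⟨J, rfl⟩ : ∃ J : Fin N → nonZeroDivisors (Ideal O), (fun j ↦ (J j : Ideal O)) = I :=
    ⟨fun j ↦ ⟨I j, hI0 j⟩, rfl⟩
  let g (j : Fin N) : Additive (ClassGroup O) := Additive.ofMul (ClassGroup.mk0 (J j))
  have hg (j : Fin N) : zmultiplesHom _ (g j) (m : ℤ) = 0 := by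
    rw [zmultiplesHom_apply, natCast_zsmul, ← ofMul_pow, ← map_pow, ofMul_eq_zero]
    exact (hprin _).mpr ⟨z j, hI j⟩
  let φ : (Fin N → ZMod m) →+ Additive (ClassGroup O) :=
    ∑ j, (ZMod.lift m ⟨zmultiplesHom _ (g j), hg j⟩).comp (Pi.evalAddMonoidHom _ j)
  refine ⟨φ, (injective_iff_map_eq_zero φ).mpr fun w hw ↦ funext fun j ↦ ?_⟩
  have hφ : φ w = Additive.ofMul (ClassGroup.mk0 (∏ j, J j ^ (w j).val)) := by
    simp only [φ, AddMonoidHom.finsetSum_apply, map_prod, map_pow, ofMul_prod, ofMul_pow]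
    refine Finset.sum_congr rfl fun l _ ↦ ?_
    have hl : w l = (((w l).val : ℤ) : ZMod m) := by simp
    conv_lhs => rw [AddMonoidHom.comp_apply, Pi.evalAddMonoidHom_apply, hl, ZMod.lift_coe]
    rw [zmultiplesHom_apply, natCast_zsmul]
  rw [hφ, ofMul_eq_zero] at hw
  obtain ⟨b, hb⟩ := (hprin _).mp hw
  have hass : Associated (b ^ m) (∏ j, z j ^ (w j).val) := by
    rw [← Ideal.span_singleton_eq_span_singleton, ← Ideal.span_singleton_pow,
      ← Ideal.submodule_span_eq, ← hb, ← Ideal.prod_span_singleton]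
    simp [← Ideal.span_singleton_pow, ← hI, ← Finset.prod_pow, pow_right_comm]
  rw [Pi.zero_apply, ← ZMod.natCast_zmod_val (w j), ZMod.natCast_eq_zero_iff]
  exact hdvd _ b hass j

theorem Ideal.exists_pow_eq_span_singleton_of_mul_eq_pow {O : Type*} [CommRing O]
    [IsDedekindDomain O] {a b c : O} {k m : ℕ} (hab : IsCoprime a b) (h : a * b = c ^ k)
    (hm : m ∣ k) : ∃ I : Ideal O, I ^ m = Ideal.span {a} := by
  let := (UniqueFactorizationMonoid.toGCDMonoid (Ideal O))
  obtain ⟨J, hJ⟩ := exists_eq_pow_of_mul_eq_pow_of_coprime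
    ((Ideal.isCoprime_span_singleton_iff a b).mpr hab) (c := Ideal.span {c}) (n := k)
    (by rw [Ideal.span_singleton_mul_span_singleton, h, Ideal.span_singleton_pow])
  obtain ⟨l, rfl⟩ := hm
  exact ⟨J ^ l, by rw [hJ, ← pow_mul, mul_comm]⟩

theorem stmt14 (Fq : Type*) [Field Fq] [Fintype Fq]
    (hq : Fintype.card Fq % 4 = 3)
    (m : ℕ) (hm : 0 < m) (hmdvd : m ∣ Fintype.card Fq + 1) (N : ℕ) :
    ∃ n : ℕ, 0 < n ∧
      ∀ (L : Type) (_ : Field L) (_ : Algebra (Polynomial Fq) L)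
        (_ : Algebra (RatFunc Fq) L)
        (_ : IsScalarTower (Polynomial Fq) (RatFunc Fq) L) (s : L),
        s ^ 2 = algebraMap (RatFunc Fq) L
            (RatFunc.X ^ (Fintype.card Fq ^ n) - RatFunc.X) →
        Algebra.adjoin (RatFunc Fq) {s} = ⊤ →
        ∃ φ : (Fin N → ZMod m) →+
            Additive (ClassGroup (integralClosure (Polynomial Fq) L)),
          Function.Injective φ := by
  have hodd : Odd (Fintype.card Fq) := Nat.odd_iff.mpr (by lia)
  obtain ⟨n, hn, hn2, c, hc0, hc, hne⟩ :=
    HyperellipticRing.exists_pairwise_pow_ne Fq (AlgebraicClosure Fq) N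
  have hn0 : 0 < n := zero_lt_two.trans_le hn2
  refine ⟨n, hn0, fun L _ _ _ _ s hs hL ↦ ?_⟩
  have hs' : s ^ 2 = algebraMap Fq[X] L (X ^ (Fintype.card Fq ^ n) - X) := by
    rw [hs, IsScalarTower.algebraMap_apply Fq[X] (RatFunc Fq) L, map_sub (algebraMap Fq[X] _),
      map_pow (algebraMap Fq[X] _), RatFunc.algebraMap_X]
  have hf := HyperellipticRing.odd_natDegree_X_pow_card_pow_sub_X Fq (κ := Fq) hodd hn0
  have hsq := HyperellipticRing.squarefree_X_pow_card_pow_sub_X Fq (κ := Fq) hn0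
  have h2 := two_ne_zero_of_odd_card Fq hodd
  obtain ⟨e⟩ := QuadraticAlgebra.exists_ringEquiv_integralClosure hf hsq h2 hs' hL
  have := QuadraticAlgebra.isDedekindDomain_of_squarefree hf hsq h2 e
  choose z hz using fun j ↦ HyperellipticRing.exists_baseChange_eq_prod_powNormElt Fq (hc j)
  have hI (j : Fin N) : ∃ I : Ideal (integralClosure Fq[X] L), I ^ m = Ideal.span {e (z j)} := by
    obtain ⟨p, hp⟩ := HyperellipticRing.exists_norm_eq_pow Fq hodd hn (hc j) (hz j)
    refine Ideal.exists_pow_eq_span_singleton_of_mul_eq_pow (b := e (star (z j)))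
      (c := e (algebraMap Fq[X] _ p)) (k := Fintype.card Fq + 1) ?_ ?_ hmdvd
    · exact (HyperellipticRing.isCoprime_star_of_baseChange_eq_prod Fq hodd hn (hc0 j) (hc j)
        (fun i k hik ↦ hne j j i k (by simpa using hik)) (hz j)).map e.toRingHom
    · rw [← map_mul, ← map_pow, ← QuadraticAlgebra.algebraMap_norm_eq_mul_star, hp, map_pow]
  choose I hI using hI
  refine ClassGroup.exists_injective_of_associated_pow_imp_dvd hm (fun j ↦ ?_) hI
    fun v b hb ↦ HyperellipticRing.dvd_of_associated_prod_pow Fq hodd hn hn2 hm hmdvd hc0 hc hne hz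
      (b := e.symm b) ?_
  · have := QuadraticAlgebra.isDomain_of_odd_natDegree
      (HyperellipticRing.odd_natDegree_X_pow_card_pow_sub_X Fq (κ := AlgebraicClosure Fq) hodd hn0)
    refine fun h ↦ Finset.prod_ne_zero_iff.mpr (fun i _ ↦
      HyperellipticRing.powNormElt_ne_zero Fq (pow_ne_zero _ (hc0 j))) (((hz j).symm.trans ?_))
    rw [(map_eq_zero_iff e e.injective).mp h, map_zero]
  · simpa using hb.map e.symm.toRingHom
end
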